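/- arXiv:2109.00726 — 4 statements merged into one kernel-verified Lean document; each statement's English description precedes it below -/
import Mathlib

section
/- Let (R, m) be a Noetherian local ring, I an m-primary ideal, and M a finitely generated R-module of Krull dimension t ≥ 2. If P and Q are polynomials with rational coefficients of degrees t and t−1 respectively such that ℓ_R(M/I^{n+1}M) = P(n) and ℓ_R((I^{n+1}M :_M m)/I^{n+1}M) = Q(n) for all sufficiently large n, then (t−1)! times the leading coefficient of Q is at most t! times the leading coefficient of P; that is, the irreducible multiplicity f⁰_I(M) is at most the Hilbert multiplicity e⁰_I(M). -/
open IsLocalRing Submodule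

/-- The colon submodule `(N :_M J) = {x ∈ M ∣ J x ⊆ N}`. -/
def Submodule.colonBy {R M : Type*} [CommRing R] [AddCommGroup M] [Module R M]
    (N : Submodule R M) (J : Ideal R) : Submodule R M where
  carrier := {x | ∀ r ∈ J, r • x ∈ N}
  add_mem' := fun {a b} ha hb r hr => by
    rw [smul_add]; exact N.add_mem (ha r hr) (hb r hr)
  zero_mem' := fun r hr => by rw [smul_zero]; exact N.zero_mem
  smul_mem' := fun c {x} hx r hr => by
    rw [smul_comm]; exact N.smul_mem c (hx r hr)

/-- The length of a module: the height of `⊤` in its lattice of submodules. -/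
noncomputable def moduleLength (R M : Type*) [Ring R] [AddCommGroup M] [Module R M] : ℕ∞ :=
  Order.height (⊤ : Submodule R M)

lemma aux_filtration {R M : Type*} [CommRing R] [IsNoetherianRing R]
    [AddCommGroup M] [Module R M] [Module.Finite R M] (I : Ideal R) :
    ∃ c : ℕ, ∀ j ≥ c, ∀ x : M, x ∈ (I ^ j • ⊤ : Submodule R M) →
      (∀ r ∈ I, r • x ∈ (I ^ (j + 2) • ⊤ : Submodule R M)) →
      x ∈ (I ^ (j + 1) • ⊤ : Submodule R M) := by
  have anti : ∀ {a b : ℕ}, a ≤ b → (I ^ b • ⊤ : Submodule R M) ≤ I ^ a • ⊤ :=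
    fun h => Submodule.smul_mono_left (Ideal.pow_le_pow_right h)
  have step : ∀ (a : ℕ) (r : R) (x : M), r ∈ I → x ∈ (I ^ a • ⊤ : Submodule R M) →
      r • x ∈ (I ^ (a + 1) • ⊤ : Submodule R M) := by
    intro a r x hr hx
    rw [pow_succ', mul_smul]
    exact Submodule.smul_mem_smul hr hx
  let K : I.Filtration M :=
    { N := fun j => (I ^ j • ⊤ : Submodule R M) ⊓ (I ^ (j + 2) • ⊤ : Submodule R M).colonBy I
      mono := fun j x hx => ⟨anti (by omega) hx.1, fun r hr => anti (by omega) (hx.2 r hr)⟩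
      smul_le := by
        intro j
        rw [Submodule.smul_le]
        intro r hr x hx
        refine ⟨step _ _ _ hr hx.1, fun s hs => ?_⟩
        exact step _ _ _ hs (hx.2 r hr) }
  have hK : K.Stable := by
    refine Ideal.Filtration.Stable.of_le (F := I.stableFiltration ⊤)
      (Ideal.stableFiltration_stable I ⊤) ?_
    intro j x hx
    exact hx.1
  obtain ⟨c, hc⟩ := hK
  refine ⟨c + 1, fun j hj x hx hx' => ?_⟩
  obtain ⟨k, rfl⟩ : ∃ k, j = k + 1 := ⟨j - 1, by omega⟩
  have h1 : x ∈ K.N (k + 1) := ⟨hx, hx'⟩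
  rw [← hc k (by omega)] at h1
  refine (Submodule.smul_le.mpr ?_ : I • K.N k ≤ _) h1
  intro r hr y hy
  exact hy.2 r hr

lemma aux_colon {R M : Type*} [CommRing R] [IsNoetherianRing R]
    [AddCommGroup M] [Module R M] [Module.Finite R M] (I : Ideal R) :
    ∃ c : ℕ, ∀ d ≥ c, ∀ n ≥ d, ∀ x : M, x ∈ (I ^ d • ⊤ : Submodule R M) →
      (∀ r ∈ I, r • x ∈ (I ^ (n + 1) • ⊤ : Submodule R M)) →
      x ∈ (I ^ n • ⊤ : Submodule R M) := by
  obtain ⟨c, hc⟩ := aux_filtration (M := M) I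
  refine ⟨c, fun d hd n hn x hx hx' => ?_⟩
  have key : ∀ k, d + k ≤ n → x ∈ (I ^ (d + k) • ⊤ : Submodule R M) := by
    intro k
    induction k with
    | zero => intro _; exact hx
    | succ k ih =>
      intro hk
      refine hc (d + k) (by omega) x (ih (by omega)) fun r hr => ?_
      exact Submodule.smul_mono_left (Ideal.pow_le_pow_right (by omega)) (hx' r hr)
  have := key (n - d) (by omega)
  rwa [show d + (n - d) = n by omega] at this

lemma aux_length_eq (R M : Type*) [Ring R] [AddCommGroup M] [Module R M] :
    moduleLength R M = Module.length R M := by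
  rw [Module.length_eq_height]; rfl

lemma aux_length {R M : Type*} [CommRing R] [AddCommGroup M] [Module R M]
    (A B C D : Submodule R M) (hAB : A ≤ B) (hAC : A ≤ C)
    (hD : D ⊓ C ≤ B) :
    Module.length R (D.map A.mkQ) + Module.length R (M ⧸ B) ≤
      Module.length R (M ⧸ A) + Module.length R (M ⧸ C) := by
  have e1 : Module.length R (M ⧸ A) =
      Module.length R (B.map A.mkQ) + Module.length R (M ⧸ B) := by
    rw [Module.length_eq_add_of_exact (B.map A.mkQ).subtype (B.map A.mkQ).mkQ
      (Submodule.subtype_injective _) (Submodule.mkQ_surjective _)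
      (LinearMap.exact_subtype_mkQ _)]
    rw [(Submodule.quotientQuotientEquivQuotient A B hAB).length_eq]
  let f : (M ⧸ A) →ₗ[R] (M ⧸ C) := A.factor hAC
  let g : (D.map A.mkQ) →ₗ[R] (M ⧸ C) := f.comp (D.map A.mkQ).subtype
  have e2 : Module.length R (D.map A.mkQ) =
      Module.length R (LinearMap.ker g) + Module.length R (LinearMap.range g) :=
    Module.length_eq_add_of_exact (LinearMap.ker g).subtype g.rangeRestrict
      (Submodule.subtype_injective _) g.surjective_rangeRestrict
      (by rw [LinearMap.exact_iff, LinearMap.ker_rangeRestrict, Submodule.range_subtype])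
  have e3 : Module.length R (LinearMap.range g) ≤ Module.length R (M ⧸ C) :=
    Module.length_le_of_injective _ (Submodule.subtype_injective _)
  have e4 : Module.length R (LinearMap.ker g) ≤ Module.length R (B.map A.mkQ) := by
    have hmem : ∀ z : LinearMap.ker g, ((z : D.map A.mkQ) : M ⧸ A) ∈ B.map A.mkQ := by
      rintro ⟨⟨z, y, hy, rfl⟩, hz⟩
      refine ⟨y, hD ⟨hy, ?_⟩, rfl⟩
      have : C.mkQ y = 0 := hz
      simpa using this
    refine Module.length_le_of_injective
      (((D.map A.mkQ).subtype.comp (LinearMap.ker g).subtype).codRestrict (B.map A.mkQ) hmem) ?_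
    intro a b hab
    have := congrArg Subtype.val hab
    exact Subtype.ext (Subtype.ext this)
  rw [e1, e2]
  calc _ ≤ Module.length R (B.map A.mkQ) + Module.length R (M ⧸ C) + Module.length R (M ⧸ B) := by
        gcongr
    _ = _ := by ring

open Polynomial in
lemma aux_poly (P Q : ℚ[X]) (t : ℕ) (ht : 1 ≤ t) (hP : P.natDegree = t + 1)
    (hQ : Q.natDegree = t) (C₀ : ℚ) (N : ℕ)
    (h : ∀ n : ℕ, n ≥ N → Q.eval ((n + 1 : ℕ) : ℚ) + P.eval (n : ℚ) ≤
      P.eval ((n + 1 : ℕ) : ℚ) + C₀) :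
    Q.leadingCoeff ≤ (t + 1) * P.leadingCoeff := by
  have tc : ∀ (F : ℚ[X]) (k : ℕ), F.natDegree ≤ k → (taylor 1 F).coeff k = F.coeff k := by
    intro F k hk
    rw [taylor_coeff, eval_eq_sum_range' (n := 1)]
    · simp [hasseDeriv_coeff]
    · have := natDegree_hasseDeriv_le F k
      omega
  have tc1 : (taylor 1 P).coeff t = P.coeff t + (t + 1) * P.coeff (t + 1) := by
    rw [taylor_coeff, eval_eq_sum_range' (n := 2)]
    · simp [hasseDeriv_coeff, Finset.sum_range_succ, add_comm 1 t]
    · have := natDegree_hasseDeriv_le P t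
      omega
  by_contra! hlt
  rw [leadingCoeff, leadingCoeff, hP, hQ] at hlt
  set S : ℚ[X] := taylor 1 P - P - taylor 1 Q + C C₀ with hS
  have hSt : S.coeff t = (t + 1) * P.coeff (t + 1) - Q.coeff t := by
    rw [hS, coeff_add, coeff_sub, coeff_sub, tc1, tc Q t hQ.le, coeff_C, if_neg (by omega)]
    ring
  have hSd : S.natDegree ≤ t := by
    rw [natDegree_le_iff_coeff_eq_zero]
    intro k hk
    rw [hS, coeff_add, coeff_sub, coeff_sub, tc P k (by omega), tc Q k (by omega), coeff_C,
      if_neg (by omega), coeff_eq_zero_of_natDegree_lt (p := Q) (by omega)]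
    ring
  have hneg : S.coeff t < 0 := by rw [hSt]; linarith
  have hSe : S.natDegree = t := le_antisymm hSd (le_natDegree_of_ne_zero hneg.ne)
  have hlim := S.tendsto_atBot_of_leadingCoeff_nonpos
    (natDegree_pos_iff_degree_pos.mp (by omega)) (by rw [leadingCoeff, hSe]; exact hneg.le)
  have hl2 := hlim.comp (tendsto_natCast_atTop_atTop (R := ℚ))
  obtain ⟨n, hn1, hn2⟩ := ((hl2.eventually_lt_atBot 0).and (Filter.eventually_ge_atTop N)).exists
  have := h n hn2
  simp only [hS, Function.comp, eval_add, eval_sub, taylor_eval, eval_C] at hn1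
  push_cast at this
  linarith

/-- If `dim M = t ≥ 2` then `f⁰_I(M) ≤ e⁰_I(M)`. -/
theorem statement1 {R M : Type*} [CommRing R] [IsNoetherianRing R] [IsLocalRing R]
    [AddCommGroup M] [Module R M] [Module.Finite R M]
    (I : Ideal R) (hI : I.radical = maximalIdeal R)
    (t : ℕ) (ht : 2 ≤ t)
    (hdim : ringKrullDim (R ⧸ Module.annihilator R M) = t)
    (P Q : Polynomial ℚ) (hPdeg : P.natDegree = t) (hQdeg : Q.natDegree = t - 1)
    (hP : ∃ N : ℕ, ∀ n ≥ N, ∃ len : ℕ,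
      moduleLength R (M ⧸ (I ^ (n + 1) • ⊤ : Submodule R M)) = len ∧
        (len : ℚ) = P.eval (n : ℚ))
    (hQ : ∃ N : ℕ, ∀ n ≥ N, ∃ len : ℕ,
      moduleLength R ↥(Submodule.map (I ^ (n + 1) • ⊤ : Submodule R M).mkQ
        ((I ^ (n + 1) • ⊤ : Submodule R M).colonBy (maximalIdeal R))) = len ∧
        (len : ℚ) = Q.eval (n : ℚ)) :
    ((t - 1).factorial : ℚ) * Q.leadingCoeff ≤ (t.factorial : ℚ) * P.leadingCoeff := by
  obtain ⟨s, rfl⟩ : ∃ s, t = s + 1 := ⟨t - 1, by omega⟩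
  rw [Nat.add_sub_cancel] at hQdeg ⊢
  obtain ⟨N₁, hP⟩ := hP
  obtain ⟨N₂, hQ⟩ := hQ
  obtain ⟨c, hc⟩ := aux_colon (M := M) I
  have hIm : I ≤ maximalIdeal R := hI ▸ Ideal.le_radical
  obtain ⟨L, hL, -⟩ := hP (N₁ + c) (by omega)
  have main : Q.leadingCoeff ≤ (s + 1) * P.leadingCoeff := by
    refine aux_poly P Q s (by omega) hPdeg hQdeg L (N₁ + N₂ + c) fun n hn => ?_
    obtain ⟨a, ha, ha'⟩ := hP n (by omega)
    obtain ⟨b, hb, hb'⟩ := hP (n + 1) (by omega)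
    obtain ⟨q, hq, hq'⟩ := hQ (n + 1) (by omega)
    rw [← ha', ← hb', ← hq']
    have anti : ∀ {a b : ℕ}, a ≤ b → (I ^ b • ⊤ : Submodule R M) ≤ I ^ a • ⊤ :=
      fun h => Submodule.smul_mono_left (Ideal.pow_le_pow_right h)
    have := aux_length (I ^ (n + 1 + 1) • ⊤ : Submodule R M) (I ^ (n + 1) • ⊤)
      (I ^ (N₁ + c + 1) • ⊤) ((I ^ (n + 1 + 1) • ⊤ : Submodule R M).colonBy (maximalIdeal R))
      (anti (by omega)) (anti (by omega))
      (fun x hx => hc (N₁ + c + 1) (by omega) (n + 1) (by omega) x hx.2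
        fun r hr => hx.1 r (hIm hr))
    rw [← aux_length_eq, ← aux_length_eq, ← aux_length_eq, ← aux_length_eq, ha, hb, hq, hL] at this
    exact_mod_cast this
  rw [Nat.factorial_succ]
  push_cast
  have hf : (0 : ℚ) ≤ (s.factorial : ℚ) := by positivity
  nlinarith [mul_le_mul_of_nonneg_left main hf]
end

section
/- Let (R, m) be a Noetherian local ring, I an m-primary ideal, and M a finitely generated R-module of Krull dimension t = 1. If P and Q are polynomials with rational coefficients such that ℓ_R(M/I^{n+1}M) = P(n) (with P of degree 1) and ℓ_R((I^{n+1}M :_M m)/I^{n+1}M) = Q(n) (with Q constant) for all sufficiently large n, then the constant value of Q is at most the leading coefficient of P plus ℓ_R(0 :_M m); that is, f⁰_I(M) ≤ e⁰_I(M) + ℓ_R(0 :_M m). -/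
open IsLocalRing Submodule

lemma aux_AR {R M : Type*} [CommRing R] [IsNoetherianRing R]
    [AddCommGroup M] [Module R M] [Module.Finite R M] (I : Ideal R) :
    ∃ c : ℕ, ∀ n ≥ c, ∀ y : M, (∀ r ∈ I, r • y ∈ (I ^ n • ⊤ : Submodule R M)) →
      ∃ u ∈ (I ^ (n - c) • ⊤ : Submodule R M), ∃ z : M, (∀ r ∈ I, r • z = 0) ∧ y = u + z := by
  classical
  obtain ⟨s, hs⟩ : I.FG := IsNoetherian.noetherian I
  let φ : M →ₗ[R] (s → M) := LinearMap.pi fun i => (i : R) • LinearMap.id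
  obtain ⟨c, hc⟩ := I.exists_pow_inf_eq_pow_smul (LinearMap.range φ)
  refine ⟨c, fun n hn y hy => ?_⟩
  have h1 : φ y ∈ (I ^ n • ⊤ : Submodule R (s → M)) ⊓ LinearMap.range φ := by
    refine ⟨?_, y, rfl⟩
    have : φ y = ∑ i : s, LinearMap.single R (fun _ : s => M) i (φ y i) := by
      exact (Finset.univ_sum_single (φ y)).symm
    rw [this]
    refine Submodule.sum_mem _ fun i _ => ?_
    have hm : φ y i ∈ (I ^ n • ⊤ : Submodule R M) := by
      refine hy _ ?_
      rw [← hs]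
      exact Submodule.subset_span i.2
    have := Submodule.mem_map_of_mem (f := LinearMap.single R (fun _ : s => M) i) hm
    rw [Submodule.map_smul''] at this
    exact (Submodule.smul_mono le_rfl le_top : _ ≤ (I ^ n • ⊤ : Submodule R (s → M))) this
  rw [hc n hn] at h1
  have h2 : φ y ∈ Submodule.map φ (I ^ (n - c) • ⊤) := by
    rw [Submodule.map_smul'', Submodule.map_top]
    exact (Submodule.smul_mono le_rfl inf_le_right : _ ≤ I ^ (n - c) • LinearMap.range φ) h1
  obtain ⟨u, hu, huy⟩ := h2
  refine ⟨u, hu, y - u, ?_, by abel⟩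
  have h3 : φ (y - u) = 0 := by rw [map_sub, huy, sub_self]
  have h4 : I ≤ LinearMap.ker (LinearMap.toSpanSingleton R M (y - u)) := by
    rw [← hs]
    refine Submodule.span_le.2 fun a ha => ?_
    have := congrFun h3 ⟨a, ha⟩
    simpa [φ] using this
  intro r hr
  simpa using h4 hr

lemma aux_stable {R M : Type*} [CommRing R] [IsNoetherianRing R]
    [AddCommGroup M] [Module R M] [Module.Finite R M] (I : Ideal R) (c : ℕ) :
    ∃ n₀ : ℕ, ∀ n ≥ n₀, ∀ y ∈ (I ^ (n - c) • ⊤ : Submodule R M),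
      (∀ r ∈ I, r • y ∈ (I ^ (n + 1) • ⊤ : Submodule R M)) →
      y ∈ (I ^ n • ⊤ : Submodule R M) := by
  have hle : ∀ i, I • (I ^ (i - c) • ⊤ : Submodule R M) ≤ I ^ (i + 1 - c) • ⊤ := by
    intro i
    rw [← mul_smul, ← pow_succ']
    exact Submodule.smul_mono_left (Ideal.pow_le_pow_right (by omega))
  let F : I.Filtration M :=
    { N := fun i => I ^ (i - c) • ⊤
      mono := fun i => Submodule.smul_mono_left (Ideal.pow_le_pow_right (by omega))
      smul_le := hle }
  have hF : F.Stable := by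
    refine ⟨c, fun n hn => ?_⟩
    change I • (I ^ (n - c) • ⊤ : Submodule R M) = I ^ (n + 1 - c) • ⊤
    rw [← mul_smul, ← pow_succ', Nat.sub_add_comm hn]
  let G : I.Filtration M :=
    { N := fun i => (I ^ (i - c) • ⊤) ⊓ (I ^ (i + 1) • ⊤ : Submodule R M).colonBy I
      mono := by
        intro i x hx
        refine ⟨F.mono i hx.1, fun r hr => ?_⟩
        exact Submodule.smul_mono_left (Ideal.pow_le_pow_right (by omega)) (hx.2 r hr)
      smul_le := by
        intro i
        refine le_inf ((smul_mono_right _ inf_le_left).trans (hle i)) ?_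
        refine Submodule.smul_le.2 fun a ha x hx r hr => ?_
        have := Submodule.smul_mem_smul hr (hx.2 a ha)
        rwa [← mul_smul, ← pow_succ'] at this }
  have hG : G.Stable := hF.of_le (F' := G) (fun i => inf_le_left)
  obtain ⟨n₀, h⟩ := hG
  refine ⟨n₀ + 1, fun n hn y hy hy' => ?_⟩
  obtain ⟨k, rfl⟩ : ∃ k, n = k + 1 := ⟨n - 1, by omega⟩
  have hm : y ∈ G.N (k + 1) := ⟨hy, hy'⟩
  rw [← h k (by omega)] at hm
  have : I • G.N k ≤ I ^ (k + 1) • ⊤ := Submodule.smul_le.2 fun a ha x hx => hx.2 a ha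
  exact this hm

lemma aux_main {R M : Type*} [CommRing R] [IsNoetherianRing R]
    [AddCommGroup M] [Module R M] [Module.Finite R M] (I J : Ideal R) (hIJ : I ≤ J) :
    ∃ n₀ : ℕ, ∀ n ≥ n₀,
      (I ^ n • ⊤ : Submodule R M) ⊓ (⊥ : Submodule R M).colonBy J = ⊥ ∧
      (I ^ (n + 1) • ⊤ : Submodule R M).colonBy J ≤
        (I ^ n • ⊤ : Submodule R M) ⊔ (⊥ : Submodule R M).colonBy J := by
  obtain ⟨c, hc⟩ := aux_AR (M := M) I
  obtain ⟨d, hd⟩ := aux_stable (M := M) I c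
  let K := (⊥ : Submodule R M).colonBy I
  obtain ⟨k, hk⟩ := I.exists_pow_inf_eq_pow_smul K
  have hK : ∀ n ≥ k + 1, (I ^ n • ⊤ : Submodule R M) ⊓ K = ⊥ := by
    intro n hn
    rw [hk n (by omega), eq_bot_iff]
    refine Submodule.smul_le.2 fun a ha x hx => ?_
    exact hx.2 a (Ideal.pow_le_self (by omega) ha)
  have hJK : (⊥ : Submodule R M).colonBy J ≤ K := fun x hx r hr => hx r (hIJ hr)
  refine ⟨c + d + k + 1, fun n hn => ⟨?_, ?_⟩⟩
  · exact eq_bot_iff.2 ((inf_le_inf_left _ hJK).trans (hK n (by omega)).le)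
  · intro y hy
    obtain ⟨u, hu, z, hz, rfl⟩ := hc (n + 1) (by omega) y (fun r hr => hy r (hIJ hr))
    have hu' : u ∈ (I ^ n • ⊤ : Submodule R M) := by
      refine hd n (by omega) u ?_ ?_
      · exact Submodule.smul_mono_left (Ideal.pow_le_pow_right (by omega)) hu
      · intro r hr
        have := hy r (hIJ hr)
        rwa [smul_add, hz r hr, add_zero] at this
    refine Submodule.add_mem_sup hu' ?_
    intro r hr
    rw [← hK n (by omega)]
    refine ⟨?_, K.smul_mem r (fun a ha => hz a ha)⟩
    have h1 : r • (u + z) ∈ (I ^ n • ⊤ : Submodule R M) :=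
      Submodule.smul_mono_left (Ideal.pow_le_pow_right (by omega)) (hy r hr)
    rw [smul_add] at h1
    exact ((Submodule.add_mem_iff_right _ (Submodule.smul_mem _ r hu')).1 h1)

lemma aux_len {R M : Type*} [CommRing R] [AddCommGroup M] [Module R M]
    (A B C S : Submodule R M) (hAB : A ≤ B) (hC : C ≤ B ⊔ S) :
    Module.length R (C.map A.mkQ) + Module.length R (M ⧸ B) ≤
      Module.length R (M ⧸ A) + Module.length R S := by
  have h1 : Module.length R (M ⧸ A) =
      Module.length R (B.map A.mkQ) + Module.length R (M ⧸ B) := by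
    rw [← (Submodule.quotientQuotientEquivQuotient A B hAB).length_eq]
    exact Module.length_eq_add_of_exact (B.map A.mkQ).subtype (B.map A.mkQ).mkQ
      (Submodule.subtype_injective _) (Submodule.mkQ_surjective _)
      (LinearMap.exact_subtype_mkQ _)
  have h2 : Module.length R (C.map A.mkQ) ≤
      Module.length R (B.map A.mkQ) + Module.length R S := by
    let f : (B.map A.mkQ × S) →ₗ[R] M ⧸ A :=
      LinearMap.coprod (B.map A.mkQ).subtype (A.mkQ ∘ₗ S.subtype)
    have hr : C.map A.mkQ ≤ LinearMap.range f := by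
      rintro _ ⟨x, hx, rfl⟩
      obtain ⟨b, hb, s, hs, rfl⟩ := Submodule.mem_sup.1 (hC hx)
      exact ⟨(⟨A.mkQ b, Submodule.mem_map_of_mem hb⟩, ⟨s, hs⟩), by simp [f]⟩
    rw [← Module.length_prod]
    exact (Module.length_le_of_injective (Submodule.inclusion hr)
      (Submodule.inclusion_injective hr)).trans
      (Module.length_le_of_surjective f.rangeRestrict f.surjective_rangeRestrict)
  rw [h1, add_right_comm]
  gcongr

/-- If `dim M = 1` then `f⁰_I(M) ≤ e⁰_I(M) + ℓ_R(0 :_M 𝔪)`. -/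
theorem statement2 {R M : Type*} [CommRing R] [IsNoetherianRing R] [IsLocalRing R]
    [AddCommGroup M] [Module R M] [Module.Finite R M]
    (I : Ideal R) (hI : I.radical = maximalIdeal R)
    (hdim : ringKrullDim (R ⧸ Module.annihilator R M) = 1)
    (P Q : Polynomial ℚ) (hPdeg : P.natDegree = 1) (hQdeg : Q.natDegree = 0)
    (hP : ∃ N : ℕ, ∀ n ≥ N, ∃ len : ℕ,
      moduleLength R (M ⧸ (I ^ (n + 1) • ⊤ : Submodule R M)) = len ∧
        (len : ℚ) = P.eval (n : ℚ))
    (hQ : ∃ N : ℕ, ∀ n ≥ N, ∃ len : ℕ,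
      moduleLength R ↥(Submodule.map (I ^ (n + 1) • ⊤ : Submodule R M).mkQ
        ((I ^ (n + 1) • ⊤ : Submodule R M).colonBy (maximalIdeal R))) = len ∧
        (len : ℚ) = Q.eval (n : ℚ)) :
    ∃ s : ℕ, moduleLength R ↥((⊥ : Submodule R M).colonBy (maximalIdeal R)) = s ∧
      Q.coeff 0 ≤ P.leadingCoeff + s := by
  have hlen : ∀ (N : Type _) [AddCommGroup N] [Module R N],
      moduleLength R N = Module.length R N := fun N _ _ => (Module.length_eq_height R N).symm
  have hIm : I ≤ maximalIdeal R := hI ▸ Ideal.le_radical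
  obtain ⟨n₀, h₀⟩ := aux_main (M := M) I (maximalIdeal R) hIm
  obtain ⟨n₁, h₁⟩ := hP
  obtain ⟨n₂, h₂⟩ := hQ
  let n := n₀ + n₁ + n₂
  obtain ⟨p, hp, hp'⟩ := h₁ n (by omega)
  obtain ⟨p1, hp1, hp1'⟩ := h₁ (n + 1) (by omega)
  obtain ⟨q, hq, hq'⟩ := h₂ (n + 1) (by omega)
  rw [hlen] at hp hp1 hq
  rw [hlen]
  obtain ⟨hbot, -⟩ := h₀ (n + 1) (by omega)
  obtain ⟨-, hle⟩ := h₀ (n + 1) (by omega)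
  have hfin : Module.length R ↥((⊥ : Submodule R M).colonBy (maximalIdeal R)) ≠ ⊤ := by
    have := Module.length_le_of_injective
      ((I ^ (n + 1) • ⊤ : Submodule R M).mkQ ∘ₗ
        ((⊥ : Submodule R M).colonBy (maximalIdeal R)).subtype) (by
        rw [← LinearMap.ker_eq_bot, eq_bot_iff]
        intro x hx
        have hx' : (x : M) ∈ (I ^ (n + 1) • ⊤ : Submodule R M) := by simpa using hx
        have : (x : M) ∈ (⊥ : Submodule R M) := hbot.le ⟨hx', x.2⟩
        simpa using this)
    rw [hp] at this
    exact ne_top_of_le_ne_top (ENat.natCast_ne_top p) this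
  obtain ⟨s, hs⟩ := ENat.ne_top_iff_exists.1 hfin
  refine ⟨s, hs.symm, ?_⟩
  have key := aux_len (I ^ (n + 1 + 1) • ⊤ : Submodule R M) (I ^ (n + 1) • ⊤) _ _
    (Submodule.smul_mono_left (Ideal.pow_le_pow_right (by omega))) hle
  rw [hq, hp, hp1, ← hs] at key
  have key' : q + p ≤ p1 + s := by exact_mod_cast key
  have key2 : (q : ℚ) + p ≤ p1 + s := by exact_mod_cast key'
  have hQe : Q.eval ((n + 1 : ℕ) : ℚ) = Q.coeff 0 := by
    rw [Polynomial.eq_C_of_natDegree_eq_zero hQdeg]; simp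
  have hPe : ∀ x : ℚ, P.eval x = P.coeff 0 + P.coeff 1 * x := by
    intro x
    rw [Polynomial.eval_eq_sum_range, hPdeg]
    simp [Finset.sum_range_succ]
  rw [Polynomial.leadingCoeff, hPdeg]
  rw [hq', hp', hp1', hQe, hPe, hPe] at key2
  push_cast at key2
  linarith
end

section
/- Let (R, m) be a Noetherian local ring and M a finitely generated R-module of Krull dimension t ≥ 2. If there exists a parameter ideal Q of M such that f⁰_Q(M) = ℓ_R(M/QM) (i.e., the polynomial of degree t−1 agreeing with ℓ_R((Q^{n+1}M :_M m)/Q^{n+1}M) for n ≫ 0 has leading coefficient equal to ℓ_R(M/QM)/(t−1)!), then M is an Ulrich R-module; in fact M is Cohen–Macaulay and m M = Q M. -/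
open IsLocalRing Submodule

/-- The minimal number of generators of a module. -/
noncomputable def muGen (R M : Type*) [Ring R] [AddCommGroup M] [Module R M] : ℕ :=
  sInf {n | ∃ s : Finset M, s.card = n ∧ Submodule.span R (s : Set M) = ⊤}

/-- The depth of a module over a local ring: the supremum of lengths of `M`-regular
sequences consisting of elements of the maximal ideal. -/
noncomputable def depthM (R M : Type*) [CommRing R] [IsLocalRing R]
    [AddCommGroup M] [Module R M] : ℕ :=
  sSup {n | ∃ rs : List R, rs.length = n ∧ (∀ r ∈ rs, r ∈ maximalIdeal R) ∧
    RingTheory.Sequence.IsRegular M rs}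

/-- `Q` is a parameter ideal of `M` (of dimension `t`): it is generated by `t` elements of
the maximal ideal and `M/QM` has finite length. -/
def IsParameterIdeal (R M : Type*) [CommRing R] [IsLocalRing R]
    [AddCommGroup M] [Module R M] (t : ℕ) (Q : Ideal R) : Prop :=
  Q ≤ maximalIdeal R ∧ ∃ s : Finset R, s.card = t ∧ Q = Ideal.span (s : Set R) ∧
    moduleLength R (M ⧸ (Q • ⊤ : Submodule R M)) ≠ ⊤


section RL
variable {R M : Type*} [CommRing R] [AddCommGroup M] [Module R M]

/-- relative length of `Y + X` over `X` -/
noncomputable def rl (Y X : Submodule R M) : ℕ∞ := Module.length R (Y.map X.mkQ)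

lemma rl_mono {Y Y' : Submodule R M} (X : Submodule R M) (h : Y ≤ Y') : rl Y X ≤ rl Y' X :=
  Module.length_le_of_injective (Submodule.inclusion (Submodule.map_mono h))
    (Submodule.inclusion_injective _)

lemma rl_eq_comap (Y X : Submodule R M) :
    rl Y X = Module.length R (Y ⧸ X.comap Y.subtype) := by
  have h := (X.mkQ.comp Y.subtype).quotKerEquivRange
  rw [LinearMap.ker_comp, LinearMap.range_comp, Submodule.range_subtype, Submodule.ker_mkQ] at h
  exact h.length_eq.symm

lemma rl_congr {Y X X' : Submodule R M} (h : Y ⊓ X = Y ⊓ X') : rl Y X = rl Y X' := by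
  rw [rl_eq_comap, rl_eq_comap]
  have : X.comap Y.subtype = X'.comap Y.subtype := by
    ext ⟨y, hy⟩
    have : y ∈ Y ⊓ X ↔ y ∈ Y ⊓ X' := by rw [h]
    simpa [hy] using this
  rw [this]

lemma rl_top (X : Submodule R M) : rl ⊤ X = Module.length R (M ⧸ X) := by
  unfold rl
  rw [Submodule.map_top, Submodule.range_mkQ, Module.length_top]

lemma rl_self (X : Submodule R M) : rl X X = 0 := by
  unfold rl
  rw [Submodule.mkQ_map_self]
  simp

lemma rl_eq_zero {Y X : Submodule R M} (h : rl Y X = 0) : Y ≤ X := by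
  unfold rl at h
  rw [Module.length_eq_zero_iff, Submodule.subsingleton_iff_eq_bot] at h
  intro y hy
  have h2 : X.mkQ y ∈ Y.map X.mkQ := ⟨y, hy, rfl⟩
  rw [h, Submodule.mem_bot, Submodule.mkQ_apply, Submodule.Quotient.mk_eq_zero] at h2
  exact h2

lemma rl_add {X Y Z : Submodule R M} (h1 : X ≤ Y) (h2 : Y ≤ Z) : rl Z X = rl Y X + rl Z Y := by
  let g : (Z.map X.mkQ) →ₗ[R] (Z.map Y.mkQ) :=
    (Submodule.factor h1).restrict (by
      rintro _ ⟨z, hz, rfl⟩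
      exact ⟨z, hz, rfl⟩)
  refine Module.length_eq_add_of_exact (Submodule.inclusion (Submodule.map_mono h2)) g
    (Submodule.inclusion_injective _) ?_ ?_
  · rintro ⟨_, z, hz, rfl⟩
    exact ⟨⟨_, z, hz, rfl⟩, rfl⟩
  · rintro ⟨_, z, hz, rfl⟩
    have e : g ⟨X.mkQ z, z, hz, rfl⟩ = ⟨Y.mkQ z, z, hz, rfl⟩ := rfl
    rw [e]
    constructor
    · intro h
      have h' : Y.mkQ z = 0 := congrArg Subtype.val h
      rw [Submodule.mkQ_apply, Submodule.Quotient.mk_eq_zero] at h'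
      exact ⟨⟨X.mkQ z, z, h', rfl⟩, rfl⟩
    · rintro ⟨⟨_, y, hy, rfl⟩, h⟩
      have h' : X.mkQ y = X.mkQ z := congrArg Subtype.val h
      have h3 : y - z ∈ X := (Submodule.Quotient.eq X).1 h'
      have : z ∈ Y := by
        have := Y.sub_mem hy (h1 h3)
        simpa using this
      apply Subtype.ext
      show Y.mkQ z = 0
      rwa [Submodule.mkQ_apply, Submodule.Quotient.mk_eq_zero]

lemma rl_anti {X Y : Submodule R M} (Z : Submodule R M) (h1 : X ≤ Y) (h2 : Y ≤ Z) :
    rl Z Y ≤ rl Z X := by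
  rw [rl_add h1 h2]; exact le_add_self

/-- the submodule `a M` -/
def aM (M : Type*) [AddCommGroup M] [Module R M] (a : R) : Submodule R M :=
  LinearMap.range (LinearMap.lsmul R M a)

lemma mem_aM {a : R} {y : M} : y ∈ aM M a ↔ ∃ v, a • v = y := by
  simp [aM]

/-- the submodule `(G : a)` -/
def colA (G : Submodule R M) (a : R) : Submodule R M := G.comap (LinearMap.lsmul R M a)

lemma mem_colA {G : Submodule R M} {a : R} {y : M} : y ∈ colA G a ↔ a • y ∈ G := by
  simp [colA]

lemma rl_range (G : Submodule R M) (a : R) : rl (G ⊔ aM M a) G = rl ⊤ (colA G a) := by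
  rw [rl_top]
  unfold rl
  have h := (G.mkQ.comp (LinearMap.lsmul R M a)).quotKerEquivRange
  rw [LinearMap.ker_comp, LinearMap.range_comp, Submodule.ker_mkQ] at h
  rw [Submodule.map_sup, Submodule.mkQ_map_self, bot_sup_eq]
  exact h.length_eq.symm

lemma rl_step (A G : Submodule R M) (a : R) :
    rl (A ⊓ (G ⊔ aM M a)) (A ⊓ G) ≤ rl ⊤ (colA G a) := by
  rw [← rl_range]
  refine le_trans (le_of_eq (rl_congr ?_)) (rl_mono G inf_le_right)
  ext y
  have : y ∈ G → y ∈ G ⊔ aM M a := fun h => le_sup_left (a := G) h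
  simp only [Submodule.mem_inf]; tauto

lemma succ_le_of_ne {a : ℕ∞} {l : ℕ} (h : a ≤ l) (h' : a ≠ l) : a ≤ ((l - 1 : ℕ) : ℕ∞) := by
  have ha : a ≠ ⊤ := fun e => by simp [e] at h
  lift a to ℕ using ha
  norm_cast at *
  omega

lemma rl_step_lt {A G B : Submodule R M} {a : R} {l : ℕ} (hl : rl ⊤ B = l)
    (hB : B ≤ colA G a) (h : ∃ v, v ∉ B ∧ a • v ∈ G) :
    rl (A ⊓ (G ⊔ aM M a)) (A ⊓ G) ≤ ((l - 1 : ℕ) : ℕ∞) := by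
  refine (rl_step A G a).trans (succ_le_of_ne (hl ▸ rl_anti ⊤ hB le_top) ?_)
  intro e
  have h2 := rl_add hB le_top
  rw [hl, e] at h2
  have h3 : rl (colA G a) B = 0 := by
    have hh : rl (colA G a) B ≠ ⊤ := fun e => by simp [e] at h2
    lift rl (colA G a) B to ℕ using hh with k
    norm_cast at *; omega
  obtain ⟨v, hv, hv'⟩ := h
  exact hv (rl_eq_zero h3 (mem_colA.2 hv'))

lemma rl_step_lt' {A G B T : Submodule R M} {a : R} {l : ℕ} (I : Ideal R) (hl : rl ⊤ B = l)
    (hB : B ≤ colA G a) (hA : ∀ r ∈ I, ∀ y ∈ A, r • y ∈ T) (hT : T ≤ G)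
    (h : ¬ I • (⊤ : Submodule R M) ≤ B) :
    rl (A ⊓ (G ⊔ aM M a)) (A ⊓ G) ≤ ((l - 1 : ℕ) : ℕ∞) := by
  by_cases hv : ∃ v, v ∉ B ∧ a • v ∈ G
  · exact rl_step_lt hl hB hv
  push Not at hv
  refine succ_le_of_ne ((rl_step A G a).trans (hl ▸ rl_anti ⊤ hB le_top)) ?_
  intro e
  apply h
  have e1 : rl (A ⊓ (G ⊔ aM M a)) (A ⊓ G) = rl (A ⊓ (G ⊔ aM M a)) G := by
    refine rl_congr ?_
    ext y
    have : y ∈ G → y ∈ G ⊔ aM M a := fun h => le_sup_left (a := G) h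
    simp only [Submodule.mem_inf]; tauto
  have e2 : rl (A ⊓ (G ⊔ aM M a)) G = rl (A ⊓ (G ⊔ aM M a) ⊔ G) G := by
    unfold rl
    rw [Submodule.map_sup, Submodule.mkQ_map_self, sup_bot_eq]
  have le1 : A ⊓ (G ⊔ aM M a) ⊔ G ≤ G ⊔ aM M a := sup_le inf_le_right le_sup_left
  have h2 := rl_add (X := G) le_sup_right le1
  have h4 : rl (G ⊔ aM M a) G ≤ l := by
    rw [rl_range]; exact hl ▸ rl_anti ⊤ hB le_top
  have h3 : rl (G ⊔ aM M a) (A ⊓ (G ⊔ aM M a) ⊔ G) = 0 := by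
    rw [h2, ← e2, ← e1, e] at h4
    by_contra h0
    have h5 : (l : ℕ∞) + 1 ≤ l := le_trans (by gcongr; exact Order.one_le_iff_pos.2 (pos_iff_ne_zero.2 h0)) h4
    norm_cast at h5; omega
  have h6 := rl_eq_zero h3
  rw [Submodule.smul_le]
  intro r hr v _
  by_contra hc
  apply hv _ hc
  rw [smul_comm]
  have h7 : a • v ∈ A ⊓ (G ⊔ aM M a) ⊔ G := h6 (le_sup_right (a := G) (mem_aM.2 ⟨v, rfl⟩))
  obtain ⟨y, hy, z, hz, hyz⟩ := Submodule.mem_sup.1 h7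
  rw [← hyz, smul_add]
  exact G.add_mem (hT (hA r hr y hy.1)) (G.smul_mem _ hz)

/-- counting lemma -/
lemma rl_count {ι : Type*} [LinearOrder ι] (D : Finset ι) (a : ι → R) (T A : Submodule R M)
    (hT : T ≤ A) (δ : ι → ℕ)
    (h : ∀ b ∈ D, ∀ G : Submodule R M, G = T ⊔ ⨆ c ∈ {c ∈ D | c < b}, aM M (a c) →
      rl (A ⊓ (G ⊔ aM M (a b))) (A ⊓ G) ≤ (δ b : ℕ∞)) :
    rl (A ⊓ (T ⊔ ⨆ c ∈ D, aM M (a c))) T ≤ ((∑ b ∈ D, δ b : ℕ) : ℕ∞) := by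
  induction D using Finset.induction_on_max with
  | empty => simp [hT, rl_self]
  | insert b S hb ih =>
    have hbS : b ∉ S := fun hh => lt_irrefl _ (hb b hh)
    have hh := ih (fun b' hb' G hG => h b' (Finset.mem_insert_of_mem hb') G (by
      rw [hG]
      congr! 4 with c
      simp only [Finset.mem_filter, Finset.mem_insert]
      constructor
      · tauto
      · rintro ⟨rfl | h1, h2⟩
        · exact absurd (hb _ hb') (not_lt.2 h2.le)
        · exact ⟨h1, h2⟩))
    have hS := h b (Finset.mem_insert_self _ _) (T ⊔ ⨆ c ∈ S, aM M (a c)) (by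
      congr! 4 with c
      simp only [Finset.mem_filter, Finset.mem_insert]
      constructor
      · intro h; exact ⟨Or.inr h, hb _ h⟩
      · rintro ⟨rfl | h1, h2⟩
        · exact absurd h2 (lt_irrefl _)
        · exact h1)
    have e : T ⊔ ⨆ c ∈ insert b S, aM M (a c) = (T ⊔ ⨆ c ∈ S, aM M (a c)) ⊔ aM M (a b) := by
      rw [Finset.iSup_insert, sup_assoc]; congr 1; rw [sup_comm]
    rw [e, Finset.sum_insert hbS, rl_add (Y := A ⊓ (T ⊔ ⨆ c ∈ S, aM M (a c)))
      (le_inf hT le_sup_left) (inf_le_inf_left _ le_sup_left)]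
    rw [add_comm (δ b)]
    push_cast
    push_cast at hh
    exact add_le_add hh hS

lemma rl_count_eq {ι : Type*} [LinearOrder ι] (D : Finset ι) (a : ι → R) (T : Submodule R M)
    (l : ℕ∞)
    (h : ∀ b ∈ D, ∀ G : Submodule R M, G = T ⊔ ⨆ c ∈ {c ∈ D | c < b}, aM M (a c) →
      rl ⊤ (colA G (a b)) = l) :
    rl (T ⊔ ⨆ c ∈ D, aM M (a c)) T = D.card * l := by
  induction D using Finset.induction_on_max with
  | empty => simp [rl_self]
  | insert b S hb ih =>
    have hbS : b ∉ S := fun hh => lt_irrefl _ (hb b hh)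
    have hh := ih (fun b' hb' G hG => h b' (Finset.mem_insert_of_mem hb') G (by
      rw [hG]
      congr! 4 with c
      simp only [Finset.mem_filter, Finset.mem_insert]
      constructor
      · tauto
      · rintro ⟨rfl | h1, h2⟩
        · exact absurd (hb _ hb') (not_lt.2 h2.le)
        · exact ⟨h1, h2⟩))
    have hS := h b (Finset.mem_insert_self _ _) (T ⊔ ⨆ c ∈ S, aM M (a c)) (by
      congr! 4 with c
      simp only [Finset.mem_filter, Finset.mem_insert]
      constructor
      · intro h; exact ⟨Or.inr h, hb _ h⟩
      · rintro ⟨rfl | h1, h2⟩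
        · exact absurd h2 (lt_irrefl _)
        · exact h1)
    have e : T ⊔ ⨆ c ∈ insert b S, aM M (a c) = (T ⊔ ⨆ c ∈ S, aM M (a c)) ⊔ aM M (a b) := by
      rw [Finset.iSup_insert, sup_assoc]; congr 1; rw [sup_comm]
    rw [e, Finset.card_insert_of_notMem hbS, rl_add (Y := (T ⊔ ⨆ c ∈ S, aM M (a c)))
      le_sup_left le_sup_left, rl_range, hh, hS]
    push_cast
    ring

end RL

section Mono
variable {R M : Type*} [CommRing R] [AddCommGroup M] [Module R M] {t : ℕ}

/-- exponents of degree `n` -/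
def DD (t n : ℕ) : Finset (Fin t → ℕ) := Finset.Nat.antidiagonalTuple t n

lemma mem_DD {n : ℕ} {α : Fin t → ℕ} : α ∈ DD t n ↔ ∑ i, α i = n :=
  Finset.Nat.mem_antidiagonalTuple

/-- monomials -/
def mon (x : Fin t → R) (α : Fin t → ℕ) : R := ∏ i, x i ^ α i

lemma mon_add (x : Fin t → R) (α β : Fin t → ℕ) : mon x (α + β) = mon x α * mon x β := by
  simp [mon, pow_add, Finset.prod_mul_distrib]

lemma mon_single (x : Fin t → R) (i : Fin t) : mon x (Pi.single i 1) = x i := by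
  unfold mon
  rw [Finset.prod_eq_single i]
  · simp
  · intro j _ hj; simp [Pi.single_eq_of_ne hj]
  · simp

/-- the ideal generated by the sequence -/
def QQ (x : Fin t → R) : Ideal R := Ideal.span (Set.range x)

lemma mon_mem (x : Fin t → R) (α : Fin t → ℕ) : mon x α ∈ QQ x ^ (∑ i, α i) := by
  rw [← Finset.prod_pow_eq_pow_sum]
  exact Ideal.prod_mem_prod fun i _ => Ideal.pow_mem_pow (Ideal.subset_span (Set.mem_range_self i)) _

lemma add_single_mem {n : ℕ} {α : Fin t → ℕ} (h : α ∈ DD t n) (i : Fin t) :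
    α + Pi.single i 1 ∈ DD t (n + 1) := by
  rw [mem_DD] at *
  simp [Finset.sum_add_distrib, h]

lemma aM_le (x : Fin t → R) {n : ℕ} {α : Fin t → ℕ} (h : α ∈ DD t n) :
    aM M (mon x α) ≤ QQ x ^ n • (⊤ : Submodule R M) := by
  intro y hy
  obtain ⟨v, rfl⟩ := mem_aM.1 hy
  exact Submodule.smul_mem_smul ((mem_DD.1 h) ▸ mon_mem x α) trivial

lemma QQ_pow (x : Fin t → R) (n : ℕ) :
    QQ x ^ n • (⊤ : Submodule R M) = ⨆ α ∈ DD t n, aM M (mon x α) := by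
  apply le_antisymm
  · induction n with
    | zero =>
      intro y _
      refine Submodule.mem_iSup_of_mem 0 (Submodule.mem_iSup_of_mem (by simp [mem_DD]) ?_)
      exact mem_aM.2 ⟨y, by simp [mon]⟩
    | succ n ih =>
      rw [pow_succ', Submodule.mul_smul]
      refine (Submodule.smul_mono le_rfl ih).trans ?_
      rw [Submodule.smul_le]
      intro r hr y hy
      induction hr using Submodule.span_induction with
      | mem r h =>
        obtain ⟨i, rfl⟩ := h
        induction hy using Submodule.iSup_induction' with
        | mem α y hy =>
          by_cases hα : α ∈ DD t n
          · simp only [hα, iSup_pos] at hy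
            obtain ⟨v, rfl⟩ := mem_aM.1 hy
            refine Submodule.mem_iSup_of_mem (α + Pi.single i 1)
              (Submodule.mem_iSup_of_mem (add_single_mem hα i) ?_)
            exact mem_aM.2 ⟨v, by rw [mon_add, mon_single, mul_comm, mul_smul]⟩
          · simp only [hα, iSup_neg, not_false_eq_true, Submodule.mem_bot] at hy
            simp [hy]
        | zero => simp
        | add y z _ _ hy hz => rw [smul_add]; exact add_mem hy hz
      | zero => simp
      | add r s _ _ hr hs => rw [add_smul]; exact add_mem hr hs
      | smul a r _ h => rw [smul_assoc]; exact Submodule.smul_mem _ _ h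
  · exact iSup₂_le fun α h => aM_le x h

lemma mem_QQ_pow {x : Fin t → R} {n : ℕ} {y : M} :
    y ∈ QQ x ^ n • (⊤ : Submodule R M) ↔ ∃ c : (Fin t → ℕ) → M, ∑ α ∈ DD t n, mon x α • c α = y := by
  constructor
  · intro h
    rw [QQ_pow, Submodule.mem_iSup_finset_iff_exists_sum] at h
    obtain ⟨μ, rfl⟩ := h
    choose c hc using fun α => mem_aM.1 (μ α).2
    exact ⟨c, Finset.sum_congr rfl fun α _ => hc α⟩
  · rintro ⟨c, rfl⟩
    exact Submodule.sum_mem _ fun α h => aM_le x h (mem_aM.2 ⟨_, rfl⟩)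

/-- quasi-regular sequences -/
def QReg (x : Fin t → R) (M : Type*) [AddCommGroup M] [Module R M] : Prop :=
  ∀ n, ∀ c : (Fin t → ℕ) → M,
    ∑ α ∈ DD t n, mon x α • c α ∈ QQ x ^ (n + 1) • (⊤ : Submodule R M) →
    ∀ α ∈ DD t n, c α ∈ QQ x • (⊤ : Submodule R M)

/-- exponents as a linearly ordered type -/
def Ex (t : ℕ) : Type := Lex (Fin t → ℕ)

noncomputable instance (t : ℕ) : LinearOrder (Ex t) :=
  inferInstanceAs (LinearOrder (Lex (Fin t → ℕ)))

/-- the identity map -/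
def toEx (t : ℕ) : (Fin t → ℕ) ≃ Ex t := toLex

lemma toEx_lt {α β : Fin t → ℕ} (γ : Fin t → ℕ) (h : toEx t α < toEx t β) :
    toEx t (α + γ) < toEx t (β + γ) := by
  have h' : toLex α < toLex β := h
  exact add_lt_add_left h' (toLex γ)

/-- exponents with lexicographic order -/
def DL (t n : ℕ) : Finset (Ex t) := (DD t n).map (toEx t).toEmbedding

lemma mem_DL {n : ℕ} {α : Ex t} : α ∈ DL t n ↔ (toEx t).symm α ∈ DD t n := by
  simp only [DL, Finset.mem_map_equiv]

lemma QQ_pow_lex (x : Fin t → R) (n : ℕ) :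
    QQ x ^ n • (⊤ : Submodule R M) = ⨆ α ∈ DL t n, aM M (mon x ((toEx t).symm α)) := by
  rw [QQ_pow]
  simp only [mem_DL]
  exact ((toEx t).symm.iSup_comp (g := fun α => ⨆ _ : α ∈ DD t n, aM M (mon x α))).symm

lemma QQ_succ_le (x : Fin t → R) (n : ℕ) :
    QQ x ^ (n + 1) • (⊤ : Submodule R M) ≤ QQ x ^ n • ⊤ :=
  Submodule.smul_mono_left (Ideal.pow_le_pow_right (Nat.le_succ n))

lemma QQ_le_colA (x : Fin t → R) {n : ℕ} {α : Fin t → ℕ} (h : α ∈ DD t n) {G : Submodule R M}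
    (hG : QQ x ^ (n + 1) • (⊤ : Submodule R M) ≤ G) :
    QQ x • (⊤ : Submodule R M) ≤ colA G (mon x α) := by
  intro y hy
  rw [mem_colA]
  apply hG
  rw [pow_succ, Submodule.mul_smul]
  exact Submodule.smul_mem_smul ((mem_DD.1 h) ▸ mon_mem x α) hy

lemma exists_lead (x : Fin t → R) (h : ¬ QReg x M) :
    ∃ d, ∃ β ∈ DD t d, ∃ v : M, v ∉ QQ x • (⊤ : Submodule R M) ∧ ∀ n, ∀ γ ∈ DD t n,
      mon x (β + γ) • v ∈ QQ x ^ (d + n + 1) • (⊤ : Submodule R M) ⊔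
        ⨆ c ∈ {c ∈ DL t (d + n) | c < toEx t (β + γ)}, aM M (mon x ((toEx t).symm c)) := by
  unfold QReg at h
  push Not at h
  obtain ⟨d, c, hc, α, hα, hcα⟩ := h
  classical
  let S : Finset (Ex t) := {a ∈ DL t d | c ((toEx t).symm a) ∉ QQ x • (⊤ : Submodule R M)}
  have hS : S.Nonempty := ⟨toEx t α, by simp [S, mem_DL, hα, hcα]⟩
  obtain ⟨b, hb, hmax⟩ := S.exists_max_image id hS
  simp only [S, Finset.mem_filter, mem_DL] at hb
  refine ⟨d, (toEx t).symm b, hb.1, c ((toEx t).symm b), hb.2, ?_⟩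
  intro n γ hγ
  rw [← Finset.add_sum_erase _ _ hb.1] at hc
  have hc2 : mon x γ • (mon x ((toEx t).symm b) • c ((toEx t).symm b) +
      ∑ α ∈ (DD t d).erase ((toEx t).symm b), mon x α • c α) ∈
      QQ x ^ (d + n + 1) • (⊤ : Submodule R M) := by
    have : d + n + 1 = n + (d + 1) := by ring
    rw [this, pow_add, Submodule.mul_smul]
    exact Submodule.smul_mem_smul ((mem_DD.1 hγ) ▸ mon_mem x γ) hc
  rw [smul_add, smul_smul, ← mon_add, add_comm γ] at hc2
  have key : mon x γ • ∑ α ∈ (DD t d).erase ((toEx t).symm b), mon x α • c α ∈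
      QQ x ^ (d + n + 1) • (⊤ : Submodule R M) ⊔
        ⨆ c ∈ {c ∈ DL t (d + n) | c < toEx t ((toEx t).symm b + γ)}, aM M (mon x ((toEx t).symm c)) := by
    rw [Finset.smul_sum]
    refine Submodule.sum_mem _ fun α hα => ?_
    rw [Finset.mem_erase] at hα
    rw [smul_smul, ← mon_add]
    have hdeg : γ + α ∈ DD t (d + n) := by
      have h1 := mem_DD.1 hγ
      have h2 := mem_DD.1 hα.2
      rw [mem_DD]; simp only [Pi.add_apply, Finset.sum_add_distrib]; omega
    rcases lt_or_gt_of_ne (a := toEx t α) (b := b) (fun e => hα.1 (by rw [← e]; simp)) with hlt | hlt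
    · apply Submodule.mem_sup_right
      refine Submodule.mem_iSup_of_mem (toEx t (γ + α)) (Submodule.mem_iSup_of_mem ?_ ?_)
      · rw [Finset.mem_filter, mem_DL]
        refine ⟨hdeg, ?_⟩
        rw [add_comm γ]
        have := toEx_lt γ (α := α) (β := (toEx t).symm b) (by simpa using hlt)
        exact this
      · exact mem_aM.2 ⟨_, rfl⟩
    · apply Submodule.mem_sup_left
      have : c α ∈ QQ x • (⊤ : Submodule R M) := by
        by_contra hcc
        exact absurd (hmax (toEx t α) (by simp [S, mem_DL, hα.2, hcc])) (not_le.2 hlt)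
      rw [pow_succ, Submodule.mul_smul]
      exact Submodule.smul_mem_smul ((mem_DD.1 hdeg) ▸ mon_mem x _) this
  have := Submodule.sub_mem _ (Submodule.mem_sup_left hc2) key
  simpa using this

/-- bound from the socle -/
lemma bound1 (x : Fin t → R) {l : ℕ} (hl : rl ⊤ (QQ x • (⊤ : Submodule R M)) = l) (I : Ideal R)
    (h : ¬ I • (⊤ : Submodule R M) ≤ QQ x • (⊤ : Submodule R M)) (n : ℕ) (C : Submodule R M)
    (hC : ∀ r ∈ I, ∀ y ∈ C, r • y ∈ QQ x ^ (n + 1) • (⊤ : Submodule R M))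
    (hC' : QQ x ^ (n + 1) • (⊤ : Submodule R M) ≤ C) :
    rl (C ⊓ QQ x ^ n • (⊤ : Submodule R M)) (QQ x ^ (n + 1) • (⊤ : Submodule R M)) ≤
      (((DD t n).card * (l - 1) : ℕ) : ℕ∞) := by
  have := rl_count (DL t n) (fun α => mon x ((toEx t).symm α)) (QQ x ^ (n + 1) • (⊤ : Submodule R M)) C hC'
    (fun _ => l - 1) (by
      intro b hb G hG
      have hTG : QQ x ^ (n + 1) • (⊤ : Submodule R M) ≤ G := hG ▸ le_sup_left
      exact rl_step_lt' I hl (QQ_le_colA x (mem_DL.1 hb) hTG) hC hTG h)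
  rw [← QQ_pow_lex, sup_eq_right.2 (QQ_succ_le x n)] at this
  simpa [DL] using this

/-- trivial bound -/
lemma bound0 (x : Fin t → R) {l : ℕ} (hl : rl ⊤ (QQ x • (⊤ : Submodule R M)) = l) (n : ℕ) :
    rl (QQ x ^ n • (⊤ : Submodule R M)) (QQ x ^ (n + 1) • (⊤ : Submodule R M)) ≤
      (((DD t n).card * l : ℕ) : ℕ∞) := by
  have := rl_count (DL t n) (fun α => mon x ((toEx t).symm α)) (QQ x ^ (n + 1) • (⊤ : Submodule R M)) ⊤ le_top
    (fun _ => l) (by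
      intro b hb G hG
      have hTG : QQ x ^ (n + 1) • (⊤ : Submodule R M) ≤ G := hG ▸ le_sup_left
      exact (rl_step _ _ _).trans (hl ▸ rl_anti ⊤ (QQ_le_colA x (mem_DL.1 hb) hTG) le_top))
  rw [← QQ_pow_lex, sup_eq_right.2 (QQ_succ_le x n), top_inf_eq] at this
  simpa [DL] using this

/-- bound from a relation -/
lemma bound2 (x : Fin t → R) {l : ℕ} (hl : rl ⊤ (QQ x • (⊤ : Submodule R M)) = l)
    (h : ¬ QReg x M) : ∃ d, ∀ n, ∃ k : ℕ,
    rl (QQ x ^ (d + n) • (⊤ : Submodule R M)) (QQ x ^ (d + n + 1) • (⊤ : Submodule R M)) ≤ (k : ℕ∞) ∧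
      k + (DD t n).card ≤ (DD t (d + n)).card * l := by
  classical
  obtain ⟨d, β, hβ, v, hv, hlead⟩ := exists_lead x h
  have hl1 : 1 ≤ l := by
    by_contra h0
    have : l = 0 := by omega
    rw [this] at hl
    exact hv (rl_eq_zero hl trivial)
  refine ⟨d, fun n => ?_⟩
  let S : Finset (Ex t) := (DD t n).image (fun γ => toEx t (β + γ))
  have hS : S ⊆ DL t (d + n) := by
    intro a ha
    simp only [S, Finset.mem_image] at ha
    obtain ⟨γ, hγ, rfl⟩ := ha
    rw [mem_DL, mem_DD]
    have h1 := mem_DD.1 hγ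
    have h2 := mem_DD.1 hβ
    simp only [Equiv.symm_apply_apply, Pi.add_apply, Finset.sum_add_distrib]; omega
  have hScard : S.card = (DD t n).card := by
    apply Finset.card_image_of_injective
    intro a b hab
    exact add_left_cancel ((toEx t).injective hab)
  have := rl_count (DL t (d + n)) (fun α => mon x ((toEx t).symm α))
    (QQ x ^ (d + n + 1) • (⊤ : Submodule R M)) ⊤ le_top
    (fun a => if a ∈ S then l - 1 else l) (by
      intro b hb G hG
      have hTG : QQ x ^ (d + n + 1) • (⊤ : Submodule R M) ≤ G := hG ▸ le_sup_left
      by_cases hbS : b ∈ S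
      · rw [if_pos hbS]
        refine rl_step_lt hl (QQ_le_colA x (mem_DL.1 hb) hTG) ⟨v, hv, ?_⟩
        simp only [S, Finset.mem_image] at hbS
        obtain ⟨γ, hγ, rfl⟩ := hbS
        rw [hG]
        exact hlead n γ hγ
      · rw [if_neg hbS]
        exact (rl_step _ _ _).trans (hl ▸ rl_anti ⊤ (QQ_le_colA x (mem_DL.1 hb) hTG) le_top))
  rw [← QQ_pow_lex, sup_eq_right.2 (QQ_succ_le x _), top_inf_eq] at this
  refine ⟨_, this, ?_⟩
  have e : (DD t (d + n)).card = (DL t (d + n)).card := by simp [DL]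
  rw [← hScard, e, Finset.card_eq_sum_ones S, ← Finset.inter_eq_right.2 hS,
    ← Finset.sum_ite_mem, ← Finset.sum_add_distrib, ← smul_eq_mul, ← Finset.sum_const]
  apply Finset.sum_le_sum
  intro a _
  rw [Finset.inter_eq_right.2 hS]
  split_ifs <;> omega

/-- exact value for quasi-regular sequences -/
lemma exact_len (x : Fin t → R) {l : ℕ} (hl : rl ⊤ (QQ x • (⊤ : Submodule R M)) = l)
    (h : QReg x M) (n : ℕ) :
    rl (QQ x ^ n • (⊤ : Submodule R M)) (QQ x ^ (n + 1) • (⊤ : Submodule R M)) =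
      (((DD t n).card * l : ℕ) : ℕ∞) := by
  classical
  have := rl_count_eq (DL t n) (fun α => mon x ((toEx t).symm α)) (QQ x ^ (n + 1) • (⊤ : Submodule R M)) l (by
      intro b hb G hG
      have hTG : QQ x ^ (n + 1) • (⊤ : Submodule R M) ≤ G := hG ▸ le_sup_left
      rw [← hl]
      congr 1
      refine le_antisymm ?_ (QQ_le_colA x (mem_DL.1 hb) hTG)
      intro v hv
      rw [mem_colA, hG] at hv
      obtain ⟨y, hy, z, hz, hyz⟩ := Submodule.mem_sup.1 hv
      rw [Submodule.mem_iSup_finset_iff_exists_sum] at hz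
      obtain ⟨μ, hμ⟩ := hz
      choose c hc using fun α => mem_aM.1 (μ α).2
      have h3 := h n (fun α => if toEx t α < b then - c (toEx t α) else if toEx t α = b then v else 0) (by
        have e : ∑ α ∈ DD t n, mon x α • (if toEx t α < b then - c (toEx t α) else if toEx t α = b then v else 0)
          = mon x ((toEx t).symm b) • v - z := by
          have e1 : ∑ α ∈ DD t n, mon x α • (if toEx t α < b then - c (toEx t α) else if toEx t α = b then v else 0)
            = ∑ α ∈ DL t n, mon x ((toEx t).symm α) • (if α < b then - c α else if α = b then v else 0) := by
            simp [DL]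
          rw [e1, ← hμ, Finset.sum_filter, ← Finset.add_sum_erase _ _ hb, ← Finset.add_sum_erase (DL t n) _ hb]
          simp only [lt_irrefl, if_false, if_true, zero_add]
          rw [sub_eq_add_neg, ← Finset.sum_neg_distrib]
          congr 1
          apply Finset.sum_congr rfl
          intro a ha
          rw [Finset.mem_erase] at ha
          rw [if_neg ha.1]
          split_ifs
          · rw [smul_neg, hc]
          · simp
        rw [e, ← hyz]
        simpa using hy) ((toEx t).symm b) (mem_DL.1 hb)
      simpa using h3)
  rw [← QQ_pow_lex, sup_eq_right.2 (QQ_succ_le x n)] at this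
  simpa [DL] using this

end Mono

section Colon
variable {R M : Type*} [CommRing R] [AddCommGroup M] [Module R M]

lemma mem_colonBy {N : Submodule R M} {J : Ideal R} {y : M} :
    y ∈ N.colonBy J ↔ ∀ r ∈ J, r • y ∈ N := Iff.rfl

lemma pow_succ_smul_le (Q : Ideal R) (n : ℕ) :
    Q ^ (n + 1) • (⊤ : Submodule R M) ≤ Q ^ n • ⊤ :=
  Submodule.smul_mono_left (Ideal.pow_le_pow_right (Nat.le_succ n))

lemma smul_pow_mem {Q : Ideal R} {r : R} (hr : r ∈ Q) {n : ℕ} {y : M}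
    (hy : y ∈ Q ^ n • (⊤ : Submodule R M)) : r • y ∈ Q ^ (n + 1) • (⊤ : Submodule R M) := by
  rw [pow_succ', Submodule.mul_smul]
  exact Submodule.smul_mem_smul hr hy

/-- the filtration `(Q^{j+2}M : Q) ∩ Q^j M` -/
def socFil (Q : Ideal R) (M : Type*) [AddCommGroup M] [Module R M] : Q.Filtration M where
  N j := (Q ^ (j + 2) • (⊤ : Submodule R M)).colonBy Q ⊓ Q ^ j • ⊤
  mono j := by
    refine inf_le_inf ?_ (pow_succ_smul_le Q j)
    intro y hy r hr
    exact pow_succ_smul_le Q (j + 2) (hy r hr)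
  smul_le j := by
    rw [Submodule.smul_le]
    rintro r hr y ⟨hy, hy'⟩
    exact ⟨fun s hs => smul_pow_mem hs (hy r hr), smul_pow_mem hr hy'⟩

lemma soc_vanish [IsNoetherianRing R] [Module.Finite R M] (Q : Ideal R) :
    ∃ N, ∀ j ≥ N, (Q ^ (j + 2) • (⊤ : Submodule R M)).colonBy Q ⊓ Q ^ j • ⊤ ≤
      Q ^ (j + 1) • (⊤ : Submodule R M) := by
  have h : (socFil Q M).Stable := by
    refine (Ideal.stableFiltration_stable Q (⊤ : Submodule R M)).of_le ?_
    intro j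
    exact inf_le_right
  obtain ⟨n0, hn0⟩ := h
  refine ⟨n0 + 1, fun j hj => ?_⟩
  obtain ⟨i, rfl⟩ : ∃ i, j = i + 1 := ⟨j - 1, by omega⟩
  have h1 := hn0 i (by omega)
  change _ = (Q ^ (i + 1 + 2) • (⊤ : Submodule R M)).colonBy Q ⊓ Q ^ (i + 1) • ⊤ at h1
  rw [← h1, Submodule.smul_le]
  rintro r hr y ⟨hy, _⟩
  exact hy r hr

lemma pi_mem_smul {k : ℕ} (I : Ideal R) (f : Fin k → M)
    (h : ∀ i, f i ∈ I • (⊤ : Submodule R M)) : f ∈ I • (⊤ : Submodule R (Fin k → M)) := by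
  have : f = ∑ i, LinearMap.single R (fun _ => M) i (f i) := by
    simpa using (Finset.univ_sum_single f).symm
  rw [this]
  refine Submodule.sum_mem _ fun i _ => ?_
  have h2 := Submodule.mem_map_of_mem (f := LinearMap.single R (fun _ => M) i) (h i)
  rw [Submodule.map_smul''] at h2
  exact Submodule.smul_mono le_rfl le_top h2

lemma artin_rees_colon [IsNoetherianRing R] [Module.Finite R M] {t : ℕ} (x : Fin t → R) :
    ∃ k, ∀ n ≥ k, (QQ x ^ n • (⊤ : Submodule R M)).colonBy (QQ x) ≤
      QQ x ^ (n - k) • ⊤ ⊔ (⊥ : Submodule R M).colonBy (QQ x) := by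
  let φ : M →ₗ[R] (Fin t → M) := LinearMap.pi fun i => LinearMap.lsmul R M (x i)
  obtain ⟨k, hk⟩ := Ideal.exists_pow_inf_eq_pow_smul (QQ x) (LinearMap.range φ)
  refine ⟨k, fun n hn y hy => ?_⟩
  have h1 : φ y ∈ QQ x ^ n • (⊤ : Submodule R (Fin t → M)) ⊓ LinearMap.range φ := by
    refine ⟨pi_mem_smul _ _ fun i => ?_, ⟨y, rfl⟩⟩
    exact hy (x i) (Ideal.subset_span ⟨i, rfl⟩)
  rw [hk n hn] at h1
  have h2 : φ y ∈ QQ x ^ (n - k) • (LinearMap.range φ) := Submodule.smul_mono le_rfl inf_le_right h1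
  rw [LinearMap.range_eq_map, ← Submodule.map_smul''] at h2
  obtain ⟨z, hz, hzy⟩ := h2
  have h3 : y - z ∈ (⊥ : Submodule R M).colonBy (QQ x) := by
    intro r hr
    rw [Submodule.mem_bot]
    induction hr using Submodule.span_induction with
    | mem r h =>
      obtain ⟨i, rfl⟩ := h
      have : φ z i = φ y i := by rw [hzy]
      rw [smul_sub, sub_eq_zero]
      exact this.symm
    | zero => simp
    | add r s _ _ hr hs => rw [add_smul, hr, hs, add_zero]
    | smul a r _ h => rw [smul_assoc, h, smul_zero]
  rw [show y = z + (y - z) by abel]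
  exact add_mem (Submodule.mem_sup_left hz) (Submodule.mem_sup_right h3)

lemma colon_le [IsNoetherianRing R] [Module.Finite R M] {t : ℕ} (x : Fin t → R) :
    ∃ N, ∀ n ≥ N, (QQ x ^ (n + 1) • (⊤ : Submodule R M)).colonBy (QQ x) ≤
      QQ x ^ n • ⊤ ⊔ (⊥ : Submodule R M).colonBy (QQ x) := by
  obtain ⟨k, hk⟩ := artin_rees_colon (M := M) x
  obtain ⟨N, hN⟩ := soc_vanish (M := M) (QQ x)
  refine ⟨N + k, fun n hn y hy => ?_⟩
  obtain ⟨z, hz, w, hw, rfl⟩ := Submodule.mem_sup.1 (hk (n + 1) (by omega) hy)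
  refine add_mem (Submodule.mem_sup_left ?_) (Submodule.mem_sup_right hw)
  have hzc : ∀ r ∈ QQ x, r • z ∈ QQ x ^ (n + 1) • (⊤ : Submodule R M) := by
    intro r hr
    have h1 := hy r hr
    have h2 : r • w = 0 := hw r hr
    rwa [smul_add, h2, add_zero] at h1
  have key : ∀ i j, N ≤ j → j + i = n → (z ∈ QQ x ^ j • (⊤ : Submodule R M)) →
      z ∈ QQ x ^ n • (⊤ : Submodule R M) := by
    intro i
    induction i with
    | zero => rintro j _ rfl h; exact h
    | succ i ih =>
      intro j hj hjn hz
      refine ih (j + 1) (by omega) (by omega) (hN j hj ⟨fun r hr => ?_, hz⟩)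
      exact Submodule.smul_mono_left (Ideal.pow_le_pow_right (by omega)) (hzc r hr)
  by_cases hh : n + 1 - k ≤ n
  · exact key (n - (n + 1 - k)) _ (by omega) (by omega) hz
  · exact Submodule.smul_mono_left (Ideal.pow_le_pow_right (by omega)) hz

lemma len_pow_ne_top {t : ℕ} (x : Fin t → R) {l : ℕ}
    (hl : rl ⊤ (QQ x • (⊤ : Submodule R M)) = l) (n : ℕ) :
    rl ⊤ (QQ x ^ n • (⊤ : Submodule R M)) ≠ ⊤ := by
  induction n with
  | zero => simp [rl_self]
  | succ n ih =>
    rw [rl_add (QQ_succ_le x n) le_top]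
    have := bound0 x hl n
    exact WithTop.add_ne_top.2 ⟨fun e => by rw [e] at this; exact absurd (top_le_iff.1 this) (ENat.natCast_ne_top _), ih⟩

/-- main upper bound for the socle function -/
lemma socle_bound [IsNoetherianRing R] [IsLocalRing R] [Module.Finite R M] {t : ℕ} (x : Fin t → R)
    (hQ : QQ x ≤ maximalIdeal R) {l : ℕ}
    (hl : rl ⊤ (QQ x • (⊤ : Submodule R M)) = l) :
    ∃ N c : ℕ, ∀ n ≥ N, rl ((QQ x ^ (n + 1) • (⊤ : Submodule R M)).colonBy (maximalIdeal R))
        (QQ x ^ (n + 1) • (⊤ : Submodule R M)) ≤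
      rl ((QQ x ^ (n + 1) • (⊤ : Submodule R M)).colonBy (maximalIdeal R) ⊓
        QQ x ^ n • (⊤ : Submodule R M)) (QQ x ^ (n + 1) • (⊤ : Submodule R M)) + c := by
  obtain ⟨N, hN⟩ := colon_le (M := M) x
  set H := (⊥ : Submodule R M).colonBy (QQ x) with hH
  have hfin : rl H ⊥ ≠ ⊤ := by
    obtain ⟨k, hk⟩ := Ideal.exists_pow_inf_eq_pow_smul (QQ x) H
    have h1 : QQ x ^ (k + 1) • ⊤ ⊓ H = ⊥ := by
      rw [hk (k + 1) (by omega), eq_bot_iff, show k + 1 - k = 1 by omega, pow_one, Submodule.smul_le]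
      rintro r hr y ⟨_, hy⟩
      exact hy r hr
    have h2 : rl H ⊥ = rl H (QQ x ^ (k + 1) • ⊤) := rl_congr (by rw [inf_comm H (_ • _), h1, inf_bot_eq])
    rw [h2]
    exact ne_top_of_le_ne_top (len_pow_ne_top x hl (k + 1)) (rl_mono _ le_top)
  lift rl H ⊥ to ℕ using hfin with c hc
  refine ⟨N, c, fun n hn => ?_⟩
  set T := QQ x ^ (n + 1) • (⊤ : Submodule R M)
  set C := T.colonBy (maximalIdeal R)
  have hTC : T ≤ C := fun y hy r _ => T.smul_mem r hy
  have hCH : C ≤ QQ x ^ n • ⊤ ⊔ H := by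
    refine le_trans ?_ (hN n hn)
    intro y hy r hr
    exact hy r (hQ hr)
  rw [rl_add (le_inf hTC (QQ_succ_le x n)) inf_le_left]
  gcongr
  rw [hc]
  calc rl C (C ⊓ QQ x ^ n • ⊤) = rl C (QQ x ^ n • ⊤) := rl_congr (by simp)
    _ ≤ rl (QQ x ^ n • ⊤ ⊔ H) (QQ x ^ n • ⊤) := rl_mono _ hCH
    _ = rl H (QQ x ^ n • ⊤) := by
      unfold rl
      rw [Submodule.map_sup, Submodule.mkQ_map_self, bot_sup_eq]
    _ = rl H (H ⊓ QQ x ^ n • ⊤) := rl_congr (by simp)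
    _ ≤ rl H ⊥ := rl_anti _ bot_le inf_le_left

end Colon

section Reg
variable {R M : Type*} [CommRing R] [AddCommGroup M] [Module R M]

open Pointwise in
lemma shift_sum {t : ℕ} (x : Fin t → R) (i : Fin t) (j : ℕ) (c : (Fin t → ℕ) → M) :
    ∃ c' : (Fin t → ℕ) → M, (∀ α, c' (α + Pi.single i 1) = c α) ∧ (∀ β, β i = 0 → c' β = 0) ∧
      ∑ β ∈ DD t (j + 1), mon x β • c' β = x i • ∑ α ∈ DD t j, mon x α • c α := by
  classical
  have h1 : ∀ α, (fun β : Fin t → ℕ => if β i = 0 then 0 else c (β - Pi.single i 1))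
      (α + Pi.single i 1) = c α := by
    intro α; simp
  refine ⟨fun β => if β i = 0 then 0 else c (β - Pi.single i 1), h1, ?_, ?_⟩
  · intro β h; simp [h]
  · rw [Finset.smul_sum]
    symm
    refine Finset.sum_of_injOn (fun α => α + Pi.single i 1) ?_ ?_ ?_ ?_
    · intro a _ b _ h; exact add_right_cancel h
    · intro a ha; exact add_single_mem ha i
    · intro β hβ hn
      by_cases h0 : β i = 0
      · simp [h0]
      · exfalso
        apply hn
        have e : β - Pi.single i 1 + Pi.single i 1 = β := by
          ext k
          by_cases hk : k = i
          · subst hk; simp; omega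
          · simp [Pi.single_eq_of_ne hk]
        refine ⟨β - Pi.single i 1, ?_, e⟩
        rw [mem_DD] at hβ
        rw [← e] at hβ
        simp only [Pi.add_apply, Finset.sum_add_distrib, Finset.sum_pi_single', Finset.mem_univ,
          if_true] at hβ
        rw [Finset.mem_coe, mem_DD]
        omega
    · intro α _
      have h1' := h1 α
      dsimp only at h1' ⊢
      rw [h1', mon_add, mon_single, mul_comm, mul_smul]

lemma qreg_div {t : ℕ} {x : Fin t → R} (h : QReg x M) (i : Fin t) {n : ℕ} {y : M}
    (hy : x i • y ∈ QQ x ^ (n + 1) • (⊤ : Submodule R M)) :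
    y ∈ QQ x ^ n • (⊤ : Submodule R M) := by
  have key : ∀ j ≤ n, y ∈ QQ x ^ j • (⊤ : Submodule R M) := by
    intro j
    induction j with
    | zero => simp
    | succ j ih =>
      intro hj
      obtain ⟨c, hc⟩ := mem_QQ_pow.1 (ih (by omega))
      obtain ⟨c', h1, h2, h3⟩ := shift_sum x i j c
      have := h (j + 1) c' (by
        rw [h3, hc]
        exact Submodule.smul_mono_left (Ideal.pow_le_pow_right (by omega)) hy)
      rw [← hc]
      refine Submodule.sum_mem _ fun α hα => ?_
      rw [pow_succ, Submodule.mul_smul]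
      refine Submodule.smul_mem_smul ((mem_DD.1 hα) ▸ mon_mem x α) ?_
      rw [← h1 α]
      exact this _ (add_single_mem hα i)
  exact key n le_rfl

lemma sum_cons {t : ℕ} (x : Fin (t + 1) → R) (n : ℕ) (c : (Fin t → ℕ) → M) :
    ∑ β ∈ DD (t + 1) n, mon x β • (if β 0 = 0 then c (Fin.tail β) else 0) =
      ∑ α ∈ DD t n, mon (fun i => x i.succ) α • c α := by
  symm
  refine Finset.sum_of_injOn (fun α => (Fin.cons 0 α : Fin (t + 1) → ℕ)) ?_ ?_ ?_ ?_
  · intro a _ b _ h; exact Fin.cons_right_injective _ h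
  · intro a ha
    rw [Finset.mem_coe, mem_DD] at *
    rw [Fin.sum_univ_succ]; simpa using ha
  · intro β hβ hn
    by_cases h0 : β 0 = 0
    · exfalso
      apply hn
      have e : (Fin.cons 0 (Fin.tail β) : Fin (t + 1) → ℕ) = β := by
        rw [← h0]; exact Fin.cons_self_tail β
      refine ⟨Fin.tail β, ?_, e⟩
      rw [mem_DD, Fin.sum_univ_succ, h0, zero_add] at hβ
      rw [Finset.mem_coe, mem_DD]
      exact hβ
    · simp [h0]
  · intro α _
    simp [mon, Fin.prod_univ_succ]

lemma QQ_tail_le {t : ℕ} (x : Fin (t + 1) → R) : QQ (fun i => x i.succ) ≤ QQ x := by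
  apply Ideal.span_mono
  rintro _ ⟨i, rfl⟩
  exact ⟨i.succ, rfl⟩

lemma QQ_smul_quot {t : ℕ} (x : Fin (t + 1) → R) :
    QQ x • (⊤ : Submodule R (QuotSMulTop (x 0) M)) ≤ QQ (fun i => x i.succ) • ⊤ := by
  rw [Submodule.smul_le]
  intro r hr v _
  induction hr using Submodule.span_induction with
  | mem r h =>
    obtain ⟨i, rfl⟩ := h
    refine Fin.cases ?_ (fun i => ?_) i
    · obtain ⟨w, rfl⟩ := Submodule.mkQ_surjective _ v
      rw [← map_smul, Submodule.mkQ_apply,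
        (Submodule.Quotient.mk_eq_zero _).2 (Submodule.smul_mem_pointwise_smul w (x 0) ⊤ trivial)]
      exact zero_mem _
    · exact Submodule.smul_mem_smul (Ideal.subset_span ⟨i, rfl⟩) trivial
  | zero => simp
  | add r s _ _ hr hs => rw [add_smul]; exact add_mem hr hs
  | smul a r _ h => rw [smul_assoc]; exact Submodule.smul_mem _ _ h

open Pointwise in
lemma qreg_tail {t : ℕ} (x : Fin (t + 1) → R) (h : QReg x M) :
    QReg (fun i => x i.succ) (QuotSMulTop (x 0) M) := by
  intro n c hc α hα
  choose d hd using fun α => Submodule.mkQ_surjective (x 0 • (⊤ : Submodule R M)) (c α)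
  apply QQ_smul_quot
  have goal : d α ∈ QQ x • (⊤ : Submodule R M) →
      c α ∈ QQ x • (⊤ : Submodule R (QuotSMulTop (x 0) M)) := by
    intro h1
    rw [← hd]
    have := Submodule.mem_map_of_mem (f := Submodule.mkQ (x 0 • (⊤ : Submodule R M))) h1
    rw [Submodule.map_smul''] at this
    exact Submodule.smul_mono le_rfl le_top this
  apply goal
  have e1 : (Submodule.mkQ (x 0 • (⊤ : Submodule R M)))
      (∑ α ∈ DD t n, mon (fun i => x i.succ) α • d α) ∈
      (QQ (fun i => x i.succ) ^ (n + 1) • (⊤ : Submodule R M)).map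
        (Submodule.mkQ (x 0 • (⊤ : Submodule R M))) := by
    rw [Submodule.map_smul'', Submodule.map_top, Submodule.range_mkQ, map_sum]
    convert hc using 3 with a
    rw [map_smul, hd]
  obtain ⟨z, hz, hzs⟩ := e1
  have hz' : z ∈ QQ x ^ (n + 1) • (⊤ : Submodule R M) :=
    Submodule.smul_mono_left (Ideal.pow_right_mono (QQ_tail_le x) _) hz
  have h2 := (Submodule.Quotient.eq _).1 hzs
  obtain ⟨y, -, hy⟩ := (Submodule.mem_smul_pointwise_iff_exists _ _ _).1 h2
  have hsum : ∑ α ∈ DD t n, mon (fun i => x i.succ) α • d α = z - x 0 • y := by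
    rw [hy]; abel
  have hx0 : x 0 ∈ QQ x := Ideal.subset_span ⟨0, rfl⟩
  cases n with
  | zero =>
    have h0 : DD t 0 = {0} := Finset.Nat.antidiagonalTuple_zero_right t
    rw [h0] at hsum hα
    rw [Finset.mem_singleton] at hα
    subst hα
    simp only [Finset.sum_singleton] at hsum
    have : mon (fun i => x i.succ) (0 : Fin t → ℕ) = 1 := by simp [mon]
    rw [this, one_smul] at hsum
    rw [hsum]
    refine sub_mem ?_ (Submodule.smul_mem_smul hx0 trivial)
    simpa using hz'
  | succ j =>
    have hy2 : x 0 • y ∈ QQ x ^ (j + 1) • (⊤ : Submodule R M) := by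
      have : x 0 • y = z - ∑ α ∈ DD t (j + 1), mon (fun i => x i.succ) α • d α := by
        rw [hsum]; abel
      rw [this]
      refine sub_mem (pow_succ_smul_le _ _ hz') ?_
      apply Submodule.smul_mono_left (Ideal.pow_right_mono (QQ_tail_le x) _)
      exact mem_QQ_pow.2 ⟨d, rfl⟩
    obtain ⟨g, hg⟩ := mem_QQ_pow.1 (qreg_div h 0 hy2)
    obtain ⟨g', g1, g2, g3⟩ := shift_sum x 0 j g
    have h5 := h (j + 1) (fun β => (if β 0 = 0 then d (Fin.tail β) else 0) + g' β) (by
      simp only [smul_add, Finset.sum_add_distrib]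
      rw [sum_cons, g3, hg, hsum]
      simpa using hz') (Fin.cons 0 α) (by
        rw [mem_DD] at *
        rw [Fin.sum_univ_succ]; simpa using hα)
    simp only [Fin.cons_zero, if_true, Fin.tail_cons] at h5
    rw [g2 _ (by simp), add_zero] at h5
    exact h5

end Reg

lemma qreg_regular {R : Type*} [CommRing R] [IsNoetherianRing R] [IsLocalRing R] (t : ℕ) :
    ∀ (M : Type*) [AddCommGroup M] [Module R M] [Module.Finite R M]
    (x : Fin t → R), QQ x ≤ maximalIdeal R → QReg x M →
      RingTheory.Sequence.IsWeaklyRegular M (List.ofFn x) := by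
  induction t with
  | zero => intro M _ _ _ x _ _; simp
  | succ t ih =>
    intro M _ _ _ x hx h
    rw [List.ofFn_succ]
    refine RingTheory.Sequence.IsWeaklyRegular.cons ?_ (ih _ _ ((QQ_tail_le x).trans hx)
      (qreg_tail x h))
    rw [isSMulRegular_iff_right_eq_zero_of_smul]
    intro y hy
    have hne : QQ x ≠ ⊤ := fun e => (maximalIdeal.isMaximal R).ne_top (top_le_iff.1 (e ▸ hx))
    have := Ideal.iInf_pow_smul_eq_bot_of_isLocalRing (M := M) _ hne
    rw [← Submodule.mem_bot R, ← this, Submodule.mem_iInf]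
    intro n
    exact qreg_div h 0 (by rw [hy]; exact zero_mem _)

section Num
open Polynomial

lemma card_DD (s n : ℕ) : (DD (s + 1) n).card = (n + s).choose s := by
  have h : (DD (s + 1) n).card = ((Finset.univ : Finset (Fin (s + 1))).finsuppAntidiag n).card := by
    unfold DD
    rw [← Finset.piAntidiag_univ_fin_eq_antidiagonalTuple]
    simp [Finset.finsuppAntidiag]
  rw [h, Finset.card_finsuppAntidiag_nat_eq_choose, Finset.card_univ, Fintype.card_fin,
    show s + 1 + n - 1 = n + s by omega]
  exact Nat.choose_symm_of_eq_add (by omega)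

lemma asym {s : ℕ} (hs : 1 ≤ s) (G : ℚ[X]) (hd : G.natDegree = s) (l c d N : ℕ)
    (hl : (s.factorial : ℚ) * G.leadingCoeff = l)
    (h : ∀ n ≥ N, G.eval ((d + n : ℕ) : ℚ) + ((DD (s + 1) n).card : ℚ) ≤
      c + (DD (s + 1) (d + n)).card * l) : False := by
  set H : ℚ[X] := G + preHilbertPoly ℚ s d - C (c : ℚ) - C (l : ℚ) * preHilbertPoly ℚ s 0 with hH
  have hf : (s.factorial : ℚ) ≠ 0 := by positivity
  have hc : H.coeff s = (s.factorial : ℚ)⁻¹ := by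
    have : G.coeff s = l * (s.factorial : ℚ)⁻¹ := by
      rw [← hl, leadingCoeff, hd]; field_simp
    rw [hH]
    simp only [coeff_sub, coeff_add, coeff_C_mul, coeff_preHilbertPoly_self, this, coeff_C,
      if_neg (show s ≠ 0 by omega)]
    ring
  have hcp : 0 < H.coeff s := by rw [hc]; positivity
  have hle : H.natDegree ≤ s := by
    refine (natDegree_sub_le_of_le (natDegree_sub_le_of_le (natDegree_add_le_of_degree_le hd.le
      (natDegree_preHilbertPoly ℚ s d).le) (natDegree_C _).le)
      ((natDegree_C_mul_le _ _).trans (natDegree_preHilbertPoly ℚ s 0).le)).trans ?_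
    simp
  have hdeg : H.natDegree = s := le_antisymm hle (le_natDegree_of_ne_zero hcp.ne')
  have ht := H.tendsto_atTop_of_leadingCoeff_nonneg
    (natDegree_pos_iff_degree_pos.1 (by omega)) (by rw [leadingCoeff, hdeg]; exact hcp.le)
  have h2 := (ht.comp tendsto_natCast_atTop_atTop).eventually_gt_atTop 0
  obtain ⟨n, hn, hn2⟩ := (h2.and (Filter.eventually_ge_atTop (N + d))).exists
  obtain ⟨k, rfl⟩ : ∃ k, n = d + k := ⟨n - d, by omega⟩
  have h3 := h k (by omega)
  rw [card_DD, card_DD] at h3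
  simp only [Function.comp_apply, hH, eval_sub, eval_add, eval_mul, eval_C] at hn
  rw [preHilbertPoly_eq_choose_sub_add ℚ _ (by omega : d ≤ d + k),
    preHilbertPoly_eq_choose_sub_add ℚ _ (by omega : 0 ≤ d + k)] at hn
  simp only [Nat.add_sub_cancel_left, Nat.sub_zero] at hn
  linarith

lemma lead_eq {t : ℕ} (P : ℚ[X]) (l N : ℕ)
    (h : ∀ n ≥ N, P.eval (n : ℚ) = ((n + t).choose t : ℚ) * l) :
    (l : ℚ) = t.factorial * P.leadingCoeff := by
  have e : P = C (l : ℚ) * preHilbertPoly ℚ t 0 := by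
    apply eq_of_infinite_eval_eq
    refine Set.Infinite.mono (s := Nat.cast '' (Set.Ici N)) ?_
      (Set.Infinite.image Nat.cast_injective.injOn (Set.Ici_infinite N))
    rintro _ ⟨n, hn, rfl⟩
    simp only [Set.mem_ofPred_eq, eval_mul, eval_C]
    rw [h n hn, preHilbertPoly_eq_choose_sub_add ℚ _ (Nat.zero_le n), mul_comm]
    simp
  rw [e, leadingCoeff_mul, leadingCoeff_C, leadingCoeff_preHilbertPoly]
  field_simp

end Num

section Fin
variable {R M : Type*} [CommRing R] [AddCommGroup M] [Module R M]

lemma moduleLength_eq : moduleLength R M = Module.length R M := by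
  unfold moduleLength
  rw [Module.length_eq_height]

lemma muGen_eq [Module.Finite R M] : muGen R M = (⊤ : Submodule R M).spanFinrank := by
  unfold muGen
  apply le_antisymm
  · apply Nat.sInf_le
    exact (Module.Finite.fg_top (R := R) (M := M)).exists_span_finset_card_eq_spanFinrank
  · refine le_csInf ⟨_, (Module.Finite.fg_top (R := R) (M := M)).exists_span_finset_card_eq_spanFinrank⟩ ?_
    rintro n ⟨s, rfl, hs⟩
    rw [← hs]
    exact (spanFinrank_span_le_ncard_of_finite s.finite_toSet).trans (by simp)

lemma muGen_len [IsLocalRing R] [Module.Finite R M] :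
    ((muGen R M : ℕ) : ℕ∞) = Module.length R (M ⧸ maximalIdeal R • (⊤ : Submodule R M)) := by
  rw [muGen_eq, IsLocalRing.spanFinrank_eq_finrank_quotient _ Module.Finite.fg_top]
  let : Field (R ⧸ maximalIdeal R) := Ideal.Quotient.field _
  have e : ((⊤ : Submodule R M) ⧸ maximalIdeal R • (⊤ : Submodule R (⊤ : Submodule R M))) ≃ₗ[R]
      (M ⧸ maximalIdeal R • (⊤ : Submodule R M)) :=
    Submodule.Quotient.equiv _ _ Submodule.topEquiv (by
      rw [Submodule.map_smul'']; simp)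
  rw [← e.length_eq]
  rw [Module.length_eq_of_surjective (S := R) (R := R ⧸ maximalIdeal R) Ideal.Quotient.mk_surjective]
  have : Module.Finite (R ⧸ maximalIdeal R)
      ((⊤ : Submodule R M) ⧸ maximalIdeal R • (⊤ : Submodule R (⊤ : Submodule R M))) :=
    Module.Finite.of_restrictScalars_finite R _ _
  rw [Module.length_eq_finrank]

lemma len_sum {t : ℕ} (x : Fin (t + 1) → R) {l : ℕ} (hl : rl ⊤ (QQ x • (⊤ : Submodule R M)) = l)
    (h : QReg x M) (n : ℕ) :
    rl ⊤ (QQ x ^ (n + 1) • (⊤ : Submodule R M)) = (((n + (t + 1)).choose (t + 1) * l : ℕ) : ℕ∞) := by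
  have key : ∀ n, rl ⊤ (QQ x ^ n • (⊤ : Submodule R M)) =
      ((∑ j ∈ Finset.range n, (DD (t + 1) j).card * l : ℕ) : ℕ∞) := by
    intro n
    induction n with
    | zero => simp [rl_self]
    | succ n ih =>
      rw [rl_add (pow_succ_smul_le _ n) le_top, ih, exact_len x hl h, Finset.sum_range_succ,
        add_comm]
      push_cast; rfl
  rw [key, ← Finset.sum_mul]
  simp only [card_DD]
  rw [Nat.sum_range_add_choose]
  rfl

lemma depth_eq [IsNoetherianRing R] [IsLocalRing R] [Module.Finite R M] {t : ℕ}
    (hdim : ringKrullDim (R ⧸ Module.annihilator R M) = t) (x : Fin t → R)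
    (hx : QQ x ≤ maximalIdeal R) (h : QReg x M) : depthM R M = t := by
  have hs : Module.supportDim R M = t := by
    rw [Module.supportDim_eq_ringKrullDim_quotient_annihilator, hdim]
  have hnt : Nontrivial M := by
    rw [← Module.supportDim_ne_bot_iff_nontrivial R, hs]
    exact WithBot.coe_ne_bot
  have hub : ∀ n ∈ {n | ∃ rs : List R, rs.length = n ∧ (∀ r ∈ rs, r ∈ maximalIdeal R) ∧
      RingTheory.Sequence.IsRegular M rs}, n ≤ t := by
    rintro n ⟨rs, rfl, hm, hr⟩
    have h1 := Module.supportDim_add_length_eq_supportDim_of_isRegular rs hr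
    rw [hs] at h1
    have : Nontrivial (M ⧸ Ideal.ofList rs • (⊤ : Submodule R M)) :=
      Submodule.Quotient.nontrivial_iff.2 hr.top_ne_smul.symm
    have h2 := (Module.supportDim_ne_bot_iff_nontrivial R
      (M ⧸ Ideal.ofList rs • (⊤ : Submodule R M))).2 this
    have h3 : 0 ≤ Module.supportDim R (M ⧸ Ideal.ofList rs • (⊤ : Submodule R M)) := by
      obtain ⟨a, ha⟩ := WithBot.ne_bot_iff_exists.1 h2
      rw [← ha]
      exact_mod_cast bot_le
    have h4 : ((rs.length : ℕ) : WithBot ℕ∞) ≤ (t : ℕ) := by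
      rw [← h1]
      exact le_add_of_nonneg_left h3
    exact_mod_cast h4
  have hlist : ∀ r ∈ List.ofFn x, r ∈ maximalIdeal R := by
    intro r hr
    obtain ⟨i, rfl⟩ := (List.mem_ofFn' _ _).1 hr
    exact hx (Ideal.subset_span ⟨i, rfl⟩)
  have hmem : t ∈ {n | ∃ rs : List R, rs.length = n ∧ (∀ r ∈ rs, r ∈ maximalIdeal R) ∧
      RingTheory.Sequence.IsRegular M rs} := by
    refine ⟨List.ofFn x, List.length_ofFn, hlist, qreg_regular t M x hx h, ?_⟩
    intro he
    have : (⊤ : Submodule R M) = ⊥ := by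
      refine Submodule.eq_bot_of_le_smul_of_le_jacobson_bot (Ideal.ofList (List.ofFn x)) ⊤
        Module.Finite.fg_top he.le ?_
      refine le_trans ?_ (IsLocalRing.maximalIdeal_le_jacobson _)
      exact Ideal.span_le.2 hlist
    exact top_ne_bot this
  exact le_antisymm (csSup_le ⟨t, hmem⟩ hub) (le_csSup ⟨t, hub⟩ hmem)

end Fin
/-- If `dim M = t ≥ 2` and `f⁰_Q(M) = ℓ_R(M/QM)` for some parameter ideal `Q`,
then `M` is Cohen–Macaulay with `𝔪M = QM`; in particular `M` is an Ulrich module. -/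
theorem statement9 {R M : Type*} [CommRing R] [IsNoetherianRing R] [IsLocalRing R]
    [AddCommGroup M] [Module R M] [Module.Finite R M]
    (t : ℕ) (ht : 2 ≤ t)
    (hdim : ringKrullDim (R ⧸ Module.annihilator R M) = t)
    (Q : Ideal R) (hQpar : IsParameterIdeal R M t Q)
    (G : Polynomial ℚ) (hGdeg : G.natDegree = t - 1)
    (hG : ∃ N : ℕ, ∀ n ≥ N, ∃ len : ℕ,
      moduleLength R ↥(Submodule.map (Q ^ (n + 1) • ⊤ : Submodule R M).mkQ
        ((Q ^ (n + 1) • ⊤ : Submodule R M).colonBy (maximalIdeal R))) = len ∧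
        (len : ℚ) = G.eval (n : ℚ))
    (hf : ∃ l : ℕ, moduleLength R (M ⧸ (Q • ⊤ : Submodule R M)) = l ∧
      ((t - 1).factorial : ℚ) * G.leadingCoeff = (l : ℚ)) :
    depthM R M = t ∧
    (maximalIdeal R) • (⊤ : Submodule R M) = Q • ⊤ ∧
    ∀ P : Polynomial ℚ, P.natDegree = t →
      (∃ N : ℕ, ∀ n ≥ N, ∃ len : ℕ,
        moduleLength R (M ⧸ ((maximalIdeal R) ^ (n + 1) • ⊤ : Submodule R M)) = len ∧
          (len : ℚ) = P.eval (n : ℚ)) →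
      (muGen R M : ℚ) = (t.factorial : ℚ) * P.leadingCoeff := by
  obtain ⟨hQm, S, hS, hQS, -⟩ := hQpar
  obtain ⟨l, hl, hlead⟩ := hf
  obtain ⟨s, rfl⟩ : ∃ s, t = s + 1 := ⟨t - 1, by omega⟩
  rw [Nat.add_sub_cancel] at hGdeg hlead
  obtain ⟨x, hx⟩ : ∃ x : Fin (s + 1) → R, Q = QQ x := by
    refine ⟨fun i => ((S.equivFinOfCardEq hS).symm i : R), ?_⟩
    rw [hQS, QQ]
    congr 1
    ext r
    constructor
    · intro hr
      exact ⟨S.equivFinOfCardEq hS ⟨r, hr⟩, by simp⟩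
    · rintro ⟨i, rfl⟩
      exact ((S.equivFinOfCardEq hS).symm i).2
  clear hQS
  subst hx
  rw [moduleLength_eq, ← rl_top] at hl
  obtain ⟨N1, c, hsoc⟩ := socle_bound x hQm hl
  obtain ⟨N2, hG⟩ := hG
  have hs1 : 1 ≤ s := by omega
  have hcont : ∀ d N : ℕ, (∀ n ≥ N, ∃ k : ℕ,
      rl ((QQ x ^ (d + n + 1) • (⊤ : Submodule R M)).colonBy (maximalIdeal R) ⊓
        QQ x ^ (d + n) • (⊤ : Submodule R M)) (QQ x ^ (d + n + 1) • (⊤ : Submodule R M)) ≤ (k : ℕ∞) ∧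
      k + (DD (s + 1) n).card ≤ (DD (s + 1) (d + n)).card * l) → False := by
    intro d N h
    refine asym hs1 G hGdeg l c d (N + N1 + N2) hlead ?_
    intro n hn
    obtain ⟨k, hk1, hk2⟩ := h n (by omega)
    obtain ⟨len, hlen, hGe⟩ := hG (d + n) (by omega)
    rw [moduleLength_eq] at hlen
    have h1 := hsoc (d + n) (by omega)
    have h2 : ((len : ℕ) : ℕ∞) ≤ ((k + c : ℕ) : ℕ∞) := by
      rw [← hlen]
      refine h1.trans ?_
      push_cast
      exact add_le_add_left hk1 _
    have h3 : len ≤ k + c := by exact_mod_cast h2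
    rw [← hGe]
    have h4 : len + (DD (s + 1) n).card ≤ c + (DD (s + 1) (d + n)).card * l := by omega
    exact_mod_cast h4
  have hmQ : maximalIdeal R • (⊤ : Submodule R M) ≤ QQ x • ⊤ := by
    by_contra hno
    have hl0 : l ≠ 0 := by
      rintro rfl
      exact hno (le_top.trans (rl_eq_zero (by simpa using hl)))
    refine hcont 0 0 fun n _ => ⟨(DD (s + 1) (0 + n)).card * (l - 1), ?_, ?_⟩
    · exact bound1 x hl _ hno _ _ (fun r hr y hy => mem_colonBy.1 hy r hr)
        (fun y hy => mem_colonBy.2 fun r _ => Submodule.smul_mem _ _ hy)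
    · rw [zero_add]
      obtain ⟨l', rfl⟩ := Nat.exists_eq_succ_of_ne_zero hl0
      simp only [Nat.succ_eq_add_one, Nat.add_sub_cancel]
      rw [mul_add, mul_one]
  have hreg : QReg x M := by
    by_contra hno
    obtain ⟨d, hd⟩ := bound2 x hl hno
    refine hcont d 0 fun n _ => ?_
    obtain ⟨k, hk1, hk2⟩ := hd n
    exact ⟨k, (rl_mono _ inf_le_right).trans hk1, hk2⟩
  have hmeq : maximalIdeal R • (⊤ : Submodule R M) = QQ x • ⊤ :=
    le_antisymm hmQ (Submodule.smul_mono_left hQm)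
  refine ⟨depth_eq hdim x hQm hreg, hmeq, ?_⟩
  intro P _ ⟨N, hP⟩
  have hpow : ∀ n, maximalIdeal R ^ n • (⊤ : Submodule R M) = QQ x ^ n • ⊤ := by
    intro n
    induction n with
    | zero => simp
    | succ n ih =>
      rw [pow_succ, Submodule.mul_smul, hmeq, ← Submodule.mul_smul, mul_comm, Submodule.mul_smul,
        ih, ← Submodule.mul_smul, pow_succ, mul_comm]
  have hmu : muGen R M = l := by
    have := muGen_len (R := R) (M := M)
    rw [hmeq, ← rl_top, hl] at this
    exact_mod_cast this
  rw [hmu]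
  refine lead_eq P l N fun n hn => ?_
  obtain ⟨len, h1, h2⟩ := hP n hn
  rw [moduleLength_eq, hpow, ← rl_top, len_sum x hl hreg] at h1
  have h3 : (n + (s + 1)).choose (s + 1) * l = len := by exact_mod_cast h1
  rw [← h2, ← h3]
  push_cast
  rfl
end

section
/- Let K be a field, d ≥ 1 and ℓ ≥ 1 integers, and let R = K[[x_1, …, x_d, y_1, …, y_ℓ]]/[(x_1, …, x_d)(y_1, …, y_ℓ) + (y_1, …, y_ℓ)^2] with maximal ideal m. Then for all n ≥ 1, ℓ_R((m^{n+1} :_R m)/m^{n+1}) = binom(n+d−1, d−1) + ℓ. -/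
open IsLocalRing Submodule

section Helpers

theorem aux_length_s15 {R K I : Type*} [CommRing R] [Field K] [Fintype I] (ρ : R →+* K)
    (hρ : Function.Surjective ρ) (C N : Submodule R R) (Φ : R →+ (I → K))
    (h1 : ∀ r, ∀ c ∈ C, Φ (r * c) = ρ r • Φ c)
    (h2 : ∀ c ∈ C, (Φ c = 0 ↔ c ∈ N))
    (h3 : ∀ v, ∃ c ∈ C, Φ c = v) :
    Module.length R ↥(Submodule.map N.mkQ C) = Fintype.card I := by
  let _ : Algebra R K := ρ.toAlgebra
  have e1 : Module.length R (I → K) = Fintype.card I := by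
    rw [Module.length_eq_of_surjective (R := K) (S := R) (M := I → K) hρ]
    rw [Module.length_eq_finrank]
    simp
  rw [← e1]
  let F : C →ₗ[R] (I → K) :=
    { toFun := fun c => Φ c
      map_add' := fun a b => by simp
      map_smul' := fun r c => by
        have := h1 r c c.2
        simp only [Submodule.coe_smul, smul_eq_mul, this, RingHom.id_apply]
        ext i
        simp [Algebra.smul_def, RingHom.algebraMap_toAlgebra] }
  have hF : Function.Surjective F := fun v => by
    obtain ⟨c, hc, h⟩ := h3 v
    exact ⟨⟨c, hc⟩, h⟩
  let G := N.mkQ.submoduleMap C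
  have hG : Function.Surjective G := N.mkQ.submoduleMap_surjective C
  have hk : LinearMap.ker G = LinearMap.ker F := by
    ext c
    rw [LinearMap.mem_ker, LinearMap.mem_ker]
    have : F c = 0 ↔ _ := h2 c c.2
    rw [this, ← Subtype.coe_inj]
    exact Submodule.Quotient.mk_eq_zero N
  exact ((G.quotKerEquivOfSurjective hG).symm.trans
    ((Submodule.quotEquivOfEq _ _ hk).trans (F.quotKerEquivOfSurjective hF))).length_eq

variable {σ K : Type*} [Field K]

/-- power series whose coefficients vanish on a lower set -/
def monIdeal (K : Type*) [Field K] (L : Set (σ →₀ ℕ)) (hL : IsLowerSet L) :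
    Ideal (MvPowerSeries σ K) where
  carrier := {f | ∀ e ∈ L, MvPowerSeries.coeff e f = 0}
  add_mem' := fun {a b} ha hb e he => by simp [ha e he, hb e he]
  zero_mem' := fun e _ => by simp
  smul_mem' := fun c {f} hf e he => by
    classical
    rw [smul_eq_mul, MvPowerSeries.coeff_mul]
    refine Finset.sum_eq_zero fun p hp => ?_
    rw [Finset.HasAntidiagonal.mem_antidiagonal] at hp
    rw [hf p.2 (hL (by rw [← hp]; exact le_add_self) he), mul_zero]

theorem mem_monIdeal {L : Set (σ →₀ ℕ)} {hL : IsLowerSet L} {f : MvPowerSeries σ K} :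
    f ∈ monIdeal K L hL ↔ ∀ e ∈ L, MvPowerSeries.coeff e f = 0 := Iff.rfl

theorem monomial_mem_monIdeal {L : Set (σ →₀ ℕ)} {hL : IsLowerSet L} {a : σ →₀ ℕ} (ha : a ∉ L)
    (c : K) : MvPowerSeries.monomial a c ∈ monIdeal K L hL := fun e he =>
  MvPowerSeries.coeff_monomial_ne (fun h : e = a => ha (h ▸ he)) c

theorem mem_of_monomials (I : Ideal (MvPowerSeries σ K)) (A : Finset (σ →₀ ℕ))
    (hA : ∀ a ∈ A, MvPowerSeries.monomial a (1 : K) ∈ I) :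
    ∀ f : MvPowerSeries σ K, (∀ e, MvPowerSeries.coeff e f ≠ 0 → ∃ a ∈ A, a ≤ e) → f ∈ I := by
  classical
  induction A using Finset.induction_on with
  | empty =>
    intro f hf
    have : f = 0 := by
      ext e
      by_contra h
      obtain ⟨a, ha, _⟩ := hf e h
      simp at ha
    rw [this]; exact I.zero_mem
  | insert a A _ ih =>
    intro f hf
    let g : MvPowerSeries σ K := fun e => MvPowerSeries.coeff (e + a) f
    have hg : ∀ e, MvPowerSeries.coeff e g = MvPowerSeries.coeff (e + a) f := fun e => rfl
    have key : f - MvPowerSeries.monomial a 1 * g ∈ I := by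
      refine ih (fun b hb => hA b (Finset.mem_insert_of_mem hb)) _ fun e he => ?_
      rw [map_sub, MvPowerSeries.coeff_monomial_mul, hg] at he
      by_cases hae : a ≤ e
      · rw [if_pos hae, tsub_add_cancel_of_le hae] at he
        simp at he
      · rw [if_neg hae, sub_zero] at he
        obtain ⟨b, hb, hbe⟩ := hf e he
        rcases Finset.mem_insert.1 hb with rfl | hb
        · exact absurd hbe hae
        · exact ⟨b, hb, hbe⟩
    have := I.add_mem key (I.mul_mem_right g (hA a (Finset.mem_insert_self _ _)))
    simpa using this

theorem monomial_mem_pow (M : Ideal (MvPowerSeries σ K)) (hM : ∀ i, MvPowerSeries.X i ∈ M) :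
    ∀ (k : ℕ) (a : σ →₀ ℕ), a.degree = k → MvPowerSeries.monomial a (1 : K) ∈ M ^ k := by
  intro k
  induction k with
  | zero => intro a _; simp
  | succ k ih =>
    intro a ha
    have : a ≠ 0 := by rintro rfl; simp at ha
    obtain ⟨i, hi⟩ := Finsupp.ne_iff.1 this
    have hle : Finsupp.single i 1 ≤ a := by
      rw [Finsupp.single_le_iff]
      exact Nat.one_le_iff_ne_zero.2 hi
    obtain ⟨b, rfl⟩ := exists_add_of_le hle
    have h2 : MvPowerSeries.monomial (Finsupp.single i 1 + b) (1 : K)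
        = MvPowerSeries.monomial b 1 * MvPowerSeries.X i := by
      rw [MvPowerSeries.X, MvPowerSeries.monomial_mul_monomial, add_comm, one_mul]
    rw [h2, pow_succ]
    refine Ideal.mul_mem_mul (ih b ?_) (hM i)
    rw [map_add, Finsupp.degree_single] at ha
    omega

theorem lower_deg (k : ℕ) : IsLowerSet {e : σ →₀ ℕ | e.degree < k} := fun a b hab ha =>
  lt_of_le_of_lt (Finsupp.degree_mono hab) ha

theorem pow_le_monIdeal (M : Ideal (MvPowerSeries σ K))
    (hM : ∀ f ∈ M, MvPowerSeries.constantCoeff f = 0) (k : ℕ) :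
    M ^ k ≤ monIdeal K {e : σ →₀ ℕ | e.degree < k} (lower_deg k) := by
  classical
  induction k with
  | zero => intro f _ e he; simp at he
  | succ k ih =>
    rw [pow_succ, Ideal.mul_le]
    intro f hf g hg e he
    rw [MvPowerSeries.coeff_mul]
    refine Finset.sum_eq_zero fun p hp => ?_
    rw [Finset.HasAntidiagonal.mem_antidiagonal] at hp
    by_cases h0 : p.2 = 0
    · rw [h0, MvPowerSeries.coeff_zero_eq_constantCoeff_apply, hM g hg, mul_zero]
    · rw [ih hf p.1 ?_, zero_mul]
      rw [← Finsupp.degree_eq_zero_iff] at h0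
      have he' : e.degree < k + 1 := he
      rw [← hp, map_add] at he'
      show p.1.degree < k
      omega

variable {d l : ℕ}

/-- exponents in the x variables only -/
def XOnly (e : (Fin d ⊕ Fin l) →₀ ℕ) : Prop := ∀ j, e (Sum.inr j) = 0

/-- the exponents surviving modulo the power -/
def LN (d l n : ℕ) : Set ((Fin d ⊕ Fin l) →₀ ℕ) :=
  {e | (XOnly e ∧ e.degree ≤ n) ∨ ∃ j, e = Finsupp.single (Sum.inr j) 1}

/-- the exponents surviving modulo the colon -/
def LC (d l n : ℕ) : Set ((Fin d ⊕ Fin l) →₀ ℕ) := {e | XOnly e ∧ e.degree < n}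

theorem XOnly.mono {a b : (Fin d ⊕ Fin l) →₀ ℕ} (h : b ≤ a) (ha : XOnly a) : XOnly b := fun j =>
  Nat.eq_zero_of_le_zero ((h _).trans (ha j).le)

theorem lower_LC (n : ℕ) : IsLowerSet (LC d l n) := fun _ _ hab ha =>
  ⟨ha.1.mono hab, lt_of_le_of_lt (Finsupp.degree_mono hab) ha.2⟩

theorem le_single {a : (Fin d ⊕ Fin l) →₀ ℕ} {i : Fin d ⊕ Fin l} (h : a ≤ Finsupp.single i 1) :
    a = 0 ∨ a = Finsupp.single i 1 := by
  classical
  have hk : ∀ k, k ≠ i → a k = 0 := fun k hk => by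
    have := h k
    rw [Finsupp.single_eq_of_ne hk] at this
    omega
  have hi := h i
  rw [Finsupp.single_eq_same] at hi
  rcases Nat.le_one_iff_eq_zero_or_eq_one.1 hi with h0 | h0
  · left; ext k
    by_cases hki : k = i
    · rw [hki, h0]; rfl
    · rw [hk k hki]; rfl
  · right; ext k
    by_cases hki : k = i
    · rw [hki, h0, Finsupp.single_eq_same]
    · rw [hk k hki, Finsupp.single_eq_of_ne hki]

theorem lower_LN (n : ℕ) : IsLowerSet (LN d l n) := by
  rintro a b hab (ha | ⟨j, rfl⟩)
  · exact Or.inl ⟨ha.1.mono hab, (Finsupp.degree_mono hab).trans ha.2⟩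
  · rcases le_single hab with rfl | rfl
    · exact Or.inl ⟨fun _ => rfl, by simp⟩
    · exact Or.inr ⟨j, rfl⟩

theorem LC_sub_LN {n : ℕ} : LC d l n ⊆ LN d l n := fun _ h => Or.inl ⟨h.1, h.2.le⟩

theorem not_LN {n : ℕ} (k : Fin d ⊕ Fin l) (j : Fin l) :
    Finsupp.single k 1 + Finsupp.single (Sum.inr j) 1 ∉ LN d l n := by
  classical
  rintro (h | ⟨i, h⟩)
  · have := h.1 j
    simp at this
  · have := congrArg Finsupp.degree h
    simp at this

/-- If `a + b ∈ LN` and `a ≠ 0` then `b ∈ LC`. -/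
theorem add_LN {n : ℕ} (hn : 1 ≤ n) {a b : (Fin d ⊕ Fin l) →₀ ℕ} (ha : a ≠ 0)
    (h : a + b ∈ LN d l n) : b ∈ LC d l n := by
  rw [Ne, ← Finsupp.degree_eq_zero_iff] at ha
  rcases h with h | ⟨j, h⟩
  · refine ⟨h.1.mono le_add_self, ?_⟩
    have := h.2
    rw [map_add] at this
    omega
  · have h' := congrArg Finsupp.degree h
    rw [map_add, Finsupp.degree_single] at h'
    have : b.degree = 0 := by omega
    rw [Finsupp.degree_eq_zero_iff] at this
    subst this
    exact ⟨fun _ => rfl, by rw [map_zero]; omega⟩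

theorem exists_le_of_not_LN {n : ℕ} {e : (Fin d ⊕ Fin l) →₀ ℕ} (he : e ∉ LN d l n) :
    (∃ a : (Fin d ⊕ Fin l) →₀ ℕ, a.degree = n + 1 ∧ a ≤ e) ∨
    ∃ (k : Fin d ⊕ Fin l) (j : Fin l), Finsupp.single k 1 + Finsupp.single (Sum.inr j) 1 ≤ e := by
  by_cases hdeg : n + 1 ≤ e.degree
  · obtain ⟨a, h1, h2⟩ := Finsupp.exists_le_degree_eq e _ hdeg
    exact Or.inl ⟨a, h2, h1⟩
  · right
    have hx : ¬ XOnly e := fun hx => he (Or.inl ⟨hx, by omega⟩)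
    unfold XOnly at hx
    push Not at hx
    obtain ⟨j, hj⟩ := hx
    have hle : Finsupp.single (Sum.inr j) 1 ≤ e := by
      rw [Finsupp.single_le_iff]
      exact Nat.one_le_iff_ne_zero.2 hj
    obtain ⟨b, rfl⟩ := exists_add_of_le hle
    have hb : b ≠ 0 := by
      rintro rfl
      exact he (Or.inr ⟨j, by simp⟩)
    obtain ⟨k, hk⟩ := Finsupp.ne_iff.1 hb
    refine ⟨k, j, ?_⟩
    rw [add_comm]
    refine add_le_add le_rfl ?_
    rw [Finsupp.single_le_iff]
    exact Nat.one_le_iff_ne_zero.2 hk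

open Classical in
/-- the basis exponents -/
noncomputable def IX (d l n : ℕ) : Finset ((Fin d ⊕ Fin l) →₀ ℕ) :=
  Finset.finsuppAntidiag (Finset.univ.map Function.Embedding.inl) n ∪
    Finset.univ.image fun j : Fin l => Finsupp.single (Sum.inr j) 1

theorem mem_antidiag {n : ℕ} {e : (Fin d ⊕ Fin l) →₀ ℕ} :
    e ∈ Finset.finsuppAntidiag (Finset.univ.map Function.Embedding.inl) n ↔
      XOnly e ∧ e.degree = n := by
  have hs : e.support ⊆ Finset.univ.map Function.Embedding.inl ↔ XOnly e := by
    constructor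
    · intro h j
      by_contra hj
      have := h (Finsupp.mem_support_iff.2 hj)
      simp at this
    · intro h k hk
      rcases k with i | j
      · simp
      · exact absurd (h j) (Finsupp.mem_support_iff.1 hk)
  rw [Finset.mem_finsuppAntidiag, hs, and_comm]
  refine and_congr_right fun h => ?_
  rw [Finsupp.degree_apply, Finset.sum_subset (hs.2 h)]
  intro x _ hx
  simpa using hx

theorem mem_IX {n : ℕ} (hn : 1 ≤ n) {e : (Fin d ⊕ Fin l) →₀ ℕ} :
    e ∈ IX d l n ↔ e ∈ LN d l n ∧ e ∉ LC d l n := by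
  classical
  rw [IX, Finset.mem_union, mem_antidiag]
  simp only [LN, LC, Set.mem_ofPred_eq, Finset.mem_image, Finset.mem_univ, true_and]
  constructor
  · rintro (h | ⟨j, rfl⟩)
    · exact ⟨Or.inl ⟨h.1, h.2.le⟩, fun h' => by omega⟩
    · refine ⟨Or.inr ⟨j, rfl⟩, fun h' => ?_⟩
      have := h'.1 j
      simp at this
  · rintro ⟨h | ⟨j, rfl⟩, h'⟩
    · left
      refine ⟨h.1, ?_⟩
      by_contra hne
      exact h' ⟨h.1, lt_of_le_of_ne h.2 hne⟩
    · exact Or.inr ⟨j, rfl⟩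

theorem card_IX {n : ℕ} (hd : 1 ≤ d) : (IX d l n).card = (n + d - 1).choose (d - 1) + l := by
  classical
  rw [IX, Finset.card_union_of_disjoint, Finset.card_image_of_injective,
    Finset.card_finsuppAntidiag_nat_eq_choose]
  · simp only [Finset.card_map, Finset.card_univ, Fintype.card_fin]
    congr 1
    rw [add_comm d n]
    exact Nat.choose_symm_of_eq_add (by omega)
  · intro a b h
    have := Finsupp.single_left_injective (one_ne_zero) h
    simpa using this
  · rw [Finset.disjoint_left]
    intro e he h
    obtain ⟨j, _, rfl⟩ := Finset.mem_image.1 h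
    have := (mem_antidiag.1 he).1 j
    simp at this

theorem comap_pow (J : Ideal (MvPowerSeries (Fin d ⊕ Fin l) K))
    (hJ : J = Ideal.span (Set.range fun i : Fin d =>
        (MvPowerSeries.X (Sum.inl i) : MvPowerSeries (Fin d ⊕ Fin l) K)) *
      Ideal.span (Set.range fun j : Fin l =>
        (MvPowerSeries.X (Sum.inr j) : MvPowerSeries (Fin d ⊕ Fin l) K)) +
      Ideal.span (Set.range fun j : Fin l =>
        (MvPowerSeries.X (Sum.inr j) : MvPowerSeries (Fin d ⊕ Fin l) K)) ^ 2)
    (M : Ideal (MvPowerSeries (Fin d ⊕ Fin l) K))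
    (hM : ∀ f, f ∈ M ↔ MvPowerSeries.constantCoeff f = 0) {n : ℕ} (hn : 1 ≤ n) :
    M ^ (n + 1) ⊔ J = monIdeal K (LN d l n) (lower_LN n) := by
  classical
  have hXX : ∀ (k : Fin d ⊕ Fin l) (j : Fin l),
      (MvPowerSeries.X k : MvPowerSeries (Fin d ⊕ Fin l) K) * MvPowerSeries.X (Sum.inr j)
      = MvPowerSeries.monomial (Finsupp.single k 1 + Finsupp.single (Sum.inr j) 1) 1 := by
    intro k j
    rw [MvPowerSeries.X, MvPowerSeries.X, MvPowerSeries.monomial_mul_monomial, one_mul]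
  apply le_antisymm
  · apply sup_le
    · refine (pow_le_monIdeal M (fun f hf => (hM f).1 hf) (n + 1)).trans ?_
      intro f hf e he
      refine hf e ?_
      show e.degree < n + 1
      rcases he with h | ⟨j, rfl⟩
      · have := h.2; omega
      · rw [Finsupp.degree_single]; omega
    · rw [hJ, pow_two, Ideal.span_mul_span', Ideal.span_mul_span']
      apply sup_le
      · rw [Ideal.span_le]
        rintro _ ⟨_, ⟨i, rfl⟩, _, ⟨j, rfl⟩, rfl⟩
        simp only [hXX]
        exact monomial_mem_monIdeal (not_LN _ _) _
      · rw [Ideal.span_le]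
        rintro _ ⟨_, ⟨i, rfl⟩, _, ⟨j, rfl⟩, rfl⟩
        simp only [hXX]
        exact monomial_mem_monIdeal (not_LN _ _) _
  · intro f hf
    refine mem_of_monomials _ ((Finsupp.finite_of_degree_eq (σ := Fin d ⊕ Fin l) (n + 1)).toFinset ∪
      Finset.univ.image fun p : (Fin d ⊕ Fin l) × Fin l =>
        Finsupp.single p.1 1 + Finsupp.single (Sum.inr p.2) 1) ?_ f ?_
    · intro a ha
      rcases Finset.mem_union.1 ha with ha | ha
      · have ha' : a.degree = n + 1 := by simpa using ha
        exact Ideal.mem_sup_left (monomial_mem_pow M (fun i => (hM _).2 (by simp)) _ a ha')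
      · obtain ⟨⟨k, j⟩, _, rfl⟩ := Finset.mem_image.1 ha
        apply Ideal.mem_sup_right
        rw [← hXX, hJ]
        rcases k with i | i
        · exact Ideal.mem_sup_left (Ideal.mul_mem_mul (Ideal.subset_span ⟨i, rfl⟩)
            (Ideal.subset_span ⟨j, rfl⟩))
        · rw [pow_two]
          exact Ideal.mem_sup_right (Ideal.mul_mem_mul (Ideal.subset_span ⟨i, rfl⟩)
            (Ideal.subset_span ⟨j, rfl⟩))
    · intro e he
      rcases exists_le_of_not_LN (fun h => he (hf e h)) with ⟨a, h1, h2⟩ | ⟨k, j, h⟩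
      · exact ⟨a, Finset.mem_union_left _ (by simpa using h1), h2⟩
      · exact ⟨_, Finset.mem_union_right _ (Finset.mem_image.2 ⟨(k, j), Finset.mem_univ _, rfl⟩), h⟩

theorem mul_LN {n : ℕ} (hn : 1 ≤ n) {f g : MvPowerSeries (Fin d ⊕ Fin l) K}
    (hf : f ∈ monIdeal K (LC d l n) (lower_LC n)) {e : (Fin d ⊕ Fin l) →₀ ℕ}
    (he : e ∈ LN d l n) :
    MvPowerSeries.coeff e (g * f) = MvPowerSeries.constantCoeff g * MvPowerSeries.coeff e f := by
  classical
  rw [MvPowerSeries.coeff_mul, Finset.sum_eq_single (0, e)]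
  · simp
  · rintro ⟨a, b⟩ hp hne
    rw [Finset.HasAntidiagonal.mem_antidiagonal] at hp
    simp only at hp ⊢
    have ha : a ≠ 0 := by
      rintro rfl
      apply hne
      rw [← hp, zero_add]
    rw [hf b (add_LN hn ha (hp ▸ he)), mul_zero]
  · intro h
    exact absurd (Finset.HasAntidiagonal.mem_antidiagonal.2 (zero_add e)) h

theorem colon_iff (hd : 1 ≤ d) {n : ℕ} (hn : 1 ≤ n) (f : MvPowerSeries (Fin d ⊕ Fin l) K) :
    (∀ g, MvPowerSeries.constantCoeff g = 0 → g * f ∈ monIdeal K (LN d l n) (lower_LN n)) ↔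
      f ∈ monIdeal K (LC d l n) (lower_LC n) := by
  constructor
  · intro h e he
    have := h (MvPowerSeries.X (Sum.inl ⟨0, hd⟩)) (by simp)
      (Finsupp.single (Sum.inl ⟨0, hd⟩) 1 + e) ?_
    · rwa [MvPowerSeries.X, MvPowerSeries.coeff_add_monomial_mul, one_mul] at this
    · refine Or.inl ⟨fun j => ?_, ?_⟩
      · have := he.1 j
        simp [this]
      · have := he.2
        rw [map_add, Finsupp.degree_single]
        omega
  · intro h g hg e he
    rw [mul_LN hn h he, hg, zero_mul]

end Helpers

set_option synthInstance.maxHeartbeats 800000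
set_option maxHeartbeats 1600000

/-- For `R = K⟦x₁,…,x_d,y₁,…,y_ℓ⟧/[(x)(y)+(y)²]` with maximal ideal `𝔪`,
`ℓ_R((𝔪^{n+1} :_R 𝔪)/𝔪^{n+1}) = C(n+d-1,d-1) + ℓ` for all `n ≥ 1`. -/
theorem statement15 {K : Type*} [Field K] (d l : ℕ) (hd : 1 ≤ d) (hl : 1 ≤ l)
    (J : Ideal (MvPowerSeries (Fin d ⊕ Fin l) K))
    (hJ : J = Ideal.span (Set.range fun i : Fin d =>
        (MvPowerSeries.X (Sum.inl i) : MvPowerSeries (Fin d ⊕ Fin l) K)) *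
      Ideal.span (Set.range fun j : Fin l =>
        (MvPowerSeries.X (Sum.inr j) : MvPowerSeries (Fin d ⊕ Fin l) K)) +
      Ideal.span (Set.range fun j : Fin l =>
        (MvPowerSeries.X (Sum.inr j) : MvPowerSeries (Fin d ⊕ Fin l) K)) ^ 2)
    (m : Ideal (MvPowerSeries (Fin d ⊕ Fin l) K ⧸ J)) (hm : m.IsMaximal) :
    ∀ n : ℕ, 1 ≤ n →
      moduleLength (MvPowerSeries (Fin d ⊕ Fin l) K ⧸ J)
          ↥(Submodule.map
              (Submodule.mkQ (m ^ (n + 1) :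
                Submodule (MvPowerSeries (Fin d ⊕ Fin l) K ⧸ J)
                  (MvPowerSeries (Fin d ⊕ Fin l) K ⧸ J)))
              ((m ^ (n + 1) :
                Submodule (MvPowerSeries (Fin d ⊕ Fin l) K ⧸ J)
                  (MvPowerSeries (Fin d ⊕ Fin l) K ⧸ J)).colonBy m))
        = (((n + d - 1).choose (d - 1) + l : ℕ) : ℕ∞) := by
  classical
  intro n hn
  let S := MvPowerSeries (Fin d ⊕ Fin l) K
  let π : S →+* S ⧸ J := Ideal.Quotient.mk J
  have hπ : Function.Surjective π := Ideal.Quotient.mk_surjective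
  let M : Ideal S := m.comap π
  have hMmax : M.IsMaximal := Ideal.comap_isMaximal_of_surjective π hπ
  have hM : ∀ f, f ∈ M ↔ MvPowerSeries.constantCoeff f = 0 := by
    intro f
    rw [IsLocalRing.eq_maximalIdeal hMmax, IsLocalRing.mem_maximalIdeal, mem_nonunits_iff,
      MvPowerSeries.isUnit_iff_constantCoeff, isUnit_iff_ne_zero, not_not]
  have hmM : m = M.map π := (Ideal.map_comap_of_surjective π hπ m).symm
  have hN : ∀ f, π f ∈ m ^ (n + 1) ↔ f ∈ monIdeal K (LN d l n) (lower_LN n) := by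
    intro f
    rw [← comap_pow J hJ M hM hn, ← Ideal.mem_comap, hmM, ← Ideal.map_pow,
      Ideal.comap_map_of_surjective π hπ, ← RingHom.ker_eq_comap_bot, Ideal.mk_ker]
  have hJN : J ≤ monIdeal K (LN d l n) (lower_LN n) := by
    rw [← comap_pow J hJ M hM hn]; exact le_sup_right
  have hC : ∀ f, π f ∈ (m ^ (n + 1) : Submodule (S ⧸ J) (S ⧸ J)).colonBy m ↔
      f ∈ monIdeal K (LC d l n) (lower_LC n) := by
    intro f
    rw [← colon_iff hd hn]
    constructor
    · intro h g hg
      rw [← hN, map_mul]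
      exact h (π g) ((hM g).2 hg)
    · intro h r hr
      obtain ⟨g, rfl⟩ := hπ r
      have := (hN _).2 (h g ((hM g).1 hr))
      rwa [map_mul] at this
  let Ψ : S →+ (IX d l n → K) :=
    { toFun := fun f e => MvPowerSeries.coeff e.1 f
      map_zero' := by ext; simp
      map_add' := fun a b => by ext; simp }
  have hΨ : ∀ f ∈ J, Ψ f = 0 := fun f hf => by
    ext e
    exact hJN hf e.1 ((mem_IX hn).1 e.2).1
  let Φ : (S ⧸ J) →+ (IX d l n → K) := QuotientAddGroup.lift (Submodule.toAddSubgroup J) Ψ hΨ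
  have hΦ : ∀ f, Φ (π f) = Ψ f := fun f => rfl
  let ρ : S ⧸ J →+* K := Ideal.Quotient.lift J MvPowerSeries.constantCoeff fun f hf => by
    have := hJN hf 0 (Or.inl ⟨fun _ => rfl, by simp⟩)
    simpa using this
  have hρ : ∀ f, ρ (π f) = MvPowerSeries.constantCoeff f := fun f => rfl
  rw [← card_IX hd, ← Fintype.card_coe (IX d l n), moduleLength, ← Module.length_eq_height]
  refine aux_length_s15 ρ (fun c => ⟨π (MvPowerSeries.C c), by rw [hρ]; simp⟩) _ _ Φ ?_ ?_ ?_
  · intro r c hc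
    obtain ⟨g, rfl⟩ := hπ r
    obtain ⟨f, rfl⟩ := hπ c
    rw [← map_mul, hΦ, hΦ, hρ]
    ext e
    exact mul_LN hn ((hC f).1 hc) ((mem_IX hn).1 e.2).1
  · intro c hc
    obtain ⟨f, rfl⟩ := hπ c
    have hf := (hC f).1 hc
    rw [hΦ]
    refine Iff.trans ?_ (hN f).symm
    constructor
    · intro h e he
      by_cases heC : e ∈ LC d l n
      · exact hf e heC
      · exact congrFun h ⟨e, (mem_IX hn).2 ⟨he, heC⟩⟩
    · intro h
      ext e
      exact h e.1 ((mem_IX hn).1 e.2).1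
  · intro v
    let f : S := fun e => if h : e ∈ IX d l n then v ⟨e, h⟩ else 0
    have hf : ∀ e, MvPowerSeries.coeff e f = if h : e ∈ IX d l n then v ⟨e, h⟩ else 0 :=
      fun e => rfl
    refine ⟨π f, (hC f).2 fun e he => ?_, ?_⟩
    · rw [hf, dif_neg fun h => ((mem_IX hn).1 h).2 he]
    · rw [hΦ]
      ext e
      exact (hf e.1).trans (dif_pos e.2)
end
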